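/- arXiv:2202.07531 — 8 statements merged into one kernel-verified Lean document; each statement's English description precedes it below -/
import Mathlib

section
/- For all a, b ∈ ℝ¹², one has aᵀ 𝒢(b) = −bᵀ 𝒢(a), i.e. 𝒢(b)ᵀ a = −𝒢(a)ᵀ b as vectors in ℝ¹². In particular, aᵀ 𝒢(a) = 0 for every a ∈ ℝ¹². -/
open Matrix

/-- The skew-symmetric matrix of the cross product: `hat u ζ = u × ζ`. -/
def hat (u : Fin 3 → ℝ) : Matrix (Fin 3) (Fin 3) ℝ :=
  !![0, -u 2, u 1; u 2, 0, -u 0; -u 1, u 0, 0]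

/-- Index type for `ℝ¹²` split into four blocks of `ℝ³`. -/
abbrev I12 := (Fin 3 ⊕ Fin 3) ⊕ (Fin 3 ⊕ Fin 3)

def comp1 (u : I12 → ℝ) : Fin 3 → ℝ := fun i => u (Sum.inl (Sum.inl i))
def comp2 (u : I12 → ℝ) : Fin 3 → ℝ := fun i => u (Sum.inl (Sum.inr i))
def comp3 (u : I12 → ℝ) : Fin 3 → ℝ := fun i => u (Sum.inr (Sum.inl i))
def comp4 (u : I12 → ℝ) : Fin 3 → ℝ := fun i => u (Sum.inr (Sum.inr i))

/-- The matrix `𝒢(u)` encoding the quadratic nonlinearity of the IGEB model. -/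
def calG (u : I12 → ℝ) : Matrix I12 I12 ℝ :=
  -(Matrix.fromBlocks
      (Matrix.fromBlocks (hat (comp2 u)) 0 (hat (comp1 u)) (hat (comp2 u)))
      (Matrix.fromBlocks 0 (hat (comp3 u)) (hat (comp3 u)) (hat (comp4 u)))
      0
      (Matrix.fromBlocks (hat (comp2 u)) (hat (comp1 u)) 0 (hat (comp2 u))))

theorem calG_aux (a b : I12 → ℝ) : (calG b)ᵀ *ᵥ a = -((calG a)ᵀ *ᵥ b) := by
  ext i
  rcases i with (i | i) | (i | i) <;> fin_cases i <;>
    simp [calG, hat, comp1, comp2, comp3, comp4, Matrix.mulVec, dotProduct,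
      Fintype.sum_sum_type, Fin.sum_univ_three] <;> ring

/-- For all `a, b ∈ ℝ¹²`, `aᵀ 𝒢(b) = −bᵀ 𝒢(a)`, i.e. `𝒢(b)ᵀ a = −𝒢(a)ᵀ b`;
in particular `aᵀ 𝒢(a) = 0`. -/
theorem stmt_3 (a b : I12 → ℝ) :
    (calG b)ᵀ *ᵥ a = -((calG a)ᵀ *ᵥ b) ∧ (calG a)ᵀ *ᵥ a = 0 := by
  refine ⟨calG_aux a b, ?_⟩
  have h := calG_aux a a
  ext i
  have hi := congrFun h i
  simp only [Pi.neg_apply] at hi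
  simp only [Pi.zero_apply]
  linarith
end

section
/- Let ℓ > 0 and let Q^𝒫 : [0, ℓ] → ℝ^{12×12} be continuous with Q^𝒫(x) symmetric positive definite for every x ∈ [0, ℓ]; define ḡ(x, u) = Q^𝒫(x)^{-1} 𝒢(u) Q^𝒫(x) u for x ∈ [0, ℓ] and u ∈ ℝ¹². Then for every α > 0 there exists ω_α ∈ ℝ such that for all continuous functions φ, ψ : [0, ℓ] → ℝ¹² satisfying |φ(x)| ≤ α and |ψ(x)| ≤ α for all x ∈ [0, ℓ], one has ∫₀^ℓ ⟨ḡ(x, φ(x)) − ḡ(x, ψ(x)), Q^𝒫(x)(φ(x) − ψ(x))⟩ dx ≤ ω_α ∫₀^ℓ ⟨φ(x) − ψ(x), Q^𝒫(x)(φ(x) − ψ(x))⟩ dx. -/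
open Matrix

/-- The nonlinearity `ḡ(x, u) = Q^𝒫(x)⁻¹ 𝒢(u) Q^𝒫(x) u` of the IGEB model. -/
noncomputable def gbar (Q : ℝ → Matrix I12 I12 ℝ) (x : ℝ) (u : I12 → ℝ) : I12 → ℝ :=
  ((Q x)⁻¹ * calG u * Q x) *ᵥ u


lemma hat_sub (u v : Fin 3 → ℝ) : hat (u - v) = hat u - hat v := by
  ext i j
  fin_cases i <;> fin_cases j <;> simp [hat] <;> ring

lemma hat_smul (c : ℝ) (u : Fin 3 → ℝ) : hat (c • u) = c • hat u := by
  ext i j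
  fin_cases i <;> fin_cases j <;> simp [hat]

lemma continuous_hat : Continuous hat := by
  refine continuous_matrix fun i j => ?_
  fin_cases i <;> fin_cases j <;> simp [hat] <;> fun_prop

lemma calG_sub (u v : I12 → ℝ) : calG (u - v) = calG u - calG v := by
  have h1 : comp1 (u - v) = comp1 u - comp1 v := rfl
  have h2 : comp2 (u - v) = comp2 u - comp2 v := rfl
  have h3 : comp3 (u - v) = comp3 u - comp3 v := rfl
  have h4 : comp4 (u - v) = comp4 u - comp4 v := rfl
  unfold calG
  rw [h1, h2, h3, h4, hat_sub, hat_sub, hat_sub, hat_sub]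
  ext i j
  rcases i with (i | i) | (i | i) <;> rcases j with (j | j) | (j | j) <;> simp <;> ring

lemma calG_smul (c : ℝ) (u : I12 → ℝ) : calG (c • u) = c • calG u := by
  have h1 : comp1 (c • u) = c • comp1 u := rfl
  have h2 : comp2 (c • u) = c • comp2 u := rfl
  have h3 : comp3 (c • u) = c • comp3 u := rfl
  have h4 : comp4 (c • u) = c • comp4 u := rfl
  unfold calG
  rw [h1, h2, h3, h4, hat_smul, hat_smul, hat_smul, hat_smul]
  ext i j
  rcases i with (i | i) | (i | i) <;> rcases j with (j | j) | (j | j) <;> simp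

lemma continuous_calG : Continuous calG := by
  have h1 : Continuous comp1 := by unfold comp1; fun_prop
  have h2 : Continuous comp2 := by unfold comp2; fun_prop
  have h3 : Continuous comp3 := by unfold comp3; fun_prop
  have h4 : Continuous comp4 := by unfold comp4; fun_prop
  have k1 := continuous_hat.comp h1
  have k2 := continuous_hat.comp h2
  have k3 := continuous_hat.comp h3
  have k4 := continuous_hat.comp h4
  unfold calG
  exact ((k2.matrix_fromBlocks continuous_const k1 k2).matrix_fromBlocks
    (continuous_const.matrix_fromBlocks k3 k3 k4) continuous_const
    (k2.matrix_fromBlocks k1 continuous_const k2)).neg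

/-- The integrand on the left, as a function of `(M, a, b, v)`. -/
def lhsForm (p : Matrix I12 I12 ℝ × (I12 → ℝ) × (I12 → ℝ) × (I12 → ℝ)) : ℝ :=
  (calG p.2.2.2 *ᵥ (p.1 *ᵥ p.2.1)) ⬝ᵥ p.2.2.2 + (calG p.2.2.1 *ᵥ (p.1 *ᵥ p.2.2.2)) ⬝ᵥ p.2.2.2

/-- The integrand on the right. -/
def rhsForm (p : Matrix I12 I12 ℝ × (I12 → ℝ) × (I12 → ℝ) × (I12 → ℝ)) : ℝ :=
  p.2.2.2 ⬝ᵥ (p.1 *ᵥ p.2.2.2)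

lemma continuous_lhsForm : Continuous lhsForm := by
  unfold lhsForm
  have e1 : Continuous fun p : Matrix I12 I12 ℝ × (I12 → ℝ) × (I12 → ℝ) × (I12 → ℝ) => p.1 :=
    continuous_fst
  have hv : Continuous fun p : Matrix I12 I12 ℝ × (I12 → ℝ) × (I12 → ℝ) × (I12 → ℝ) =>
    p.2.2.2 := by fun_prop
  have hb : Continuous fun p : Matrix I12 I12 ℝ × (I12 → ℝ) × (I12 → ℝ) × (I12 → ℝ) =>
    p.2.2.1 := by fun_prop
  have ha : Continuous fun p : Matrix I12 I12 ℝ × (I12 → ℝ) × (I12 → ℝ) × (I12 → ℝ) =>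
    p.2.1 := by fun_prop
  exact (((continuous_calG.comp hv).matrix_mulVec (e1.matrix_mulVec ha)).dotProduct hv).add
    (((continuous_calG.comp hb).matrix_mulVec (e1.matrix_mulVec hv)).dotProduct hv)

lemma continuous_rhsForm : Continuous rhsForm := by
  unfold rhsForm
  have hv : Continuous fun p : Matrix I12 I12 ℝ × (I12 → ℝ) × (I12 → ℝ) × (I12 → ℝ) =>
    p.2.2.2 := by fun_prop
  exact hv.dotProduct (continuous_fst.matrix_mulVec hv)

lemma lhsForm_smul (c : ℝ) (M : Matrix I12 I12 ℝ) (a b v : I12 → ℝ) :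
    lhsForm (M, a, b, c • v) = c ^ 2 * lhsForm (M, a, b, v) := by
  simp only [lhsForm, calG_smul, smul_mulVec, mulVec_smul, smul_dotProduct, dotProduct_smul,
    smul_eq_mul]
  ring

lemma rhsForm_smul (c : ℝ) (M : Matrix I12 I12 ℝ) (a b v : I12 → ℝ) :
    rhsForm (M, a, b, c • v) = c ^ 2 * rhsForm (M, a, b, v) := by
  simp only [rhsForm, mulVec_smul, smul_dotProduct, dotProduct_smul, smul_eq_mul]
  ring

lemma lhs_eq (Q : ℝ → Matrix I12 I12 ℝ) (x : ℝ) (h : (Q x).PosDef) (a b : I12 → ℝ) :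
    (gbar Q x a - gbar Q x b) ⬝ᵥ (Q x *ᵥ (a - b)) = lhsForm (Q x, a, b, a - b) := by
  have hdet : IsUnit (Q x).det := isUnit_iff_ne_zero.mpr h.det_pos.ne'
  have hT : (Q x)ᵀ = Q x := by simpa using h.isHermitian.eq
  have key : ∀ w z : I12 → ℝ, ((Q x)⁻¹ *ᵥ w) ⬝ᵥ (Q x *ᵥ z) = w ⬝ᵥ z := by
    intro w z
    rw [dotProduct_mulVec, ← mulVec_transpose, hT, mulVec_mulVec, Matrix.mul_nonsing_inv _ hdet,
      one_mulVec]
  have e : gbar Q x a - gbar Q x b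
      = (Q x)⁻¹ *ᵥ (calG a *ᵥ (Q x *ᵥ a) - calG b *ᵥ (Q x *ᵥ b)) := by
    simp only [gbar, mulVec_sub, mulVec_mulVec, Matrix.mul_assoc]
  rw [e, key]
  simp only [lhsForm]
  rw [← add_dotProduct]
  congr 1
  rw [calG_sub, sub_mulVec, mulVec_sub, mulVec_sub]
  abel

lemma mem_ball_of_sqrt (α : ℝ) (hα : 0 < α) (u : I12 → ℝ) (h : Real.sqrt (u ⬝ᵥ u) ≤ α) :
    u ∈ Metric.closedBall (0 : I12 → ℝ) α := by
  rw [mem_closedBall_zero_iff, pi_norm_le_iff_of_nonneg hα.le]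
  intro i
  refine le_trans ?_ h
  rw [Real.norm_eq_abs]
  apply Real.abs_le_sqrt
  have := Finset.single_le_sum (f := fun j => u j * u j) (fun j _ => mul_self_nonneg (u j))
    (Finset.mem_univ i)
  simpa [dotProduct, sq] using this

lemma form_bound (S : Set (Matrix I12 I12 ℝ)) (hS : IsCompact S) (hpos : ∀ M ∈ S, M.PosDef)
    (α : ℝ) : ∃ ω : ℝ, ∀ M ∈ S, ∀ a ∈ Metric.closedBall (0 : I12 → ℝ) α,
      ∀ b ∈ Metric.closedBall (0 : I12 → ℝ) α, ∀ v : I12 → ℝ,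
      lhsForm (M, a, b, v) ≤ ω * rhsForm (M, a, b, v) := by
  have hK : IsCompact (S ×ˢ Metric.closedBall (0 : I12 → ℝ) α ×ˢ
      Metric.closedBall (0 : I12 → ℝ) α ×ˢ Metric.sphere (0 : I12 → ℝ) 1) :=
    hS.prod ((isCompact_closedBall _ _).prod ((isCompact_closedBall _ _).prod (isCompact_sphere _ _)))
  have hp : ∀ (M : Matrix I12 I12 ℝ), M.PosDef → ∀ (a b v : I12 → ℝ), v ≠ 0 →
      0 < rhsForm (M, a, b, v) := by
    intro M hM a b v hv
    simpa [rhsForm] using hM.dotProduct_mulVec_pos hv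
  have hc : ContinuousOn (fun p => lhsForm p / rhsForm p) (S ×ˢ Metric.closedBall (0 : I12 → ℝ) α ×ˢ
      Metric.closedBall (0 : I12 → ℝ) α ×ˢ Metric.sphere (0 : I12 → ℝ) 1) := by
    refine continuous_lhsForm.continuousOn.div continuous_rhsForm.continuousOn ?_
    rintro ⟨M, a, b, v⟩ ⟨hM, -, -, hv⟩
    refine (hp M (hpos M hM) a b v ?_).ne'
    rintro rfl
    simp at hv
  obtain ⟨ω, hω⟩ := hK.bddAbove_image hc
  refine ⟨ω, fun M hM a ha b hb v => ?_⟩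
  by_cases hv : v = 0
  · subst hv
    simp [lhsForm, rhsForm]
  have hn : ‖v‖ ≠ 0 := norm_ne_zero_iff.mpr hv
  set w := ‖v‖⁻¹ • v with hw
  have hvw : v = ‖v‖ • w := by rw [hw, smul_smul, mul_inv_cancel₀ hn, one_smul]
  have hwn : ‖w‖ = 1 := by rw [hw, norm_smul, norm_inv, norm_norm, inv_mul_cancel₀ hn]
  have hw0 : w ≠ 0 := by rintro h; rw [h] at hwn; simp at hwn
  have := hω ⟨(M, a, b, w), ⟨hM, ha, hb, by simpa using hwn⟩, rfl⟩
  simp only at this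
  rw [div_le_iff₀ (hp M (hpos M hM) a b w hw0)] at this
  rw [hvw, lhsForm_smul, rhsForm_smul]
  nlinarith [mul_le_mul_of_nonneg_left this (sq_nonneg ‖v‖)]

/-- Quasi-dissipativity of the IGEB nonlinearity on bounded sets. -/
theorem stmt_5 (ℓ : ℝ) (hℓ : 0 < ℓ) (Q : ℝ → Matrix I12 I12 ℝ)
    (hQcont : ContinuousOn Q (Set.Icc 0 ℓ))
    (hQpos : ∀ x ∈ Set.Icc (0 : ℝ) ℓ, (Q x).PosDef) :
    ∀ α > (0 : ℝ), ∃ ω : ℝ, ∀ φ ψ : ℝ → (I12 → ℝ),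
      ContinuousOn φ (Set.Icc 0 ℓ) → ContinuousOn ψ (Set.Icc 0 ℓ) →
      (∀ x ∈ Set.Icc (0 : ℝ) ℓ, Real.sqrt (φ x ⬝ᵥ φ x) ≤ α) →
      (∀ x ∈ Set.Icc (0 : ℝ) ℓ, Real.sqrt (ψ x ⬝ᵥ ψ x) ≤ α) →
      (∫ x in (0 : ℝ)..ℓ,
          (gbar Q x (φ x) - gbar Q x (ψ x)) ⬝ᵥ (Q x *ᵥ (φ x - ψ x)))
        ≤ ω * ∫ x in (0 : ℝ)..ℓ, (φ x - ψ x) ⬝ᵥ (Q x *ᵥ (φ x - ψ x)) := by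
  intro α hα
  obtain ⟨ω, hω⟩ := form_bound (Q '' Set.Icc 0 ℓ) (isCompact_Icc.image_of_continuousOn hQcont)
    (by rintro _ ⟨x, hx, rfl⟩; exact hQpos x hx) α
  refine ⟨ω, fun φ ψ hφ hψ hφα hψα => ?_⟩
  have hu : Set.uIcc 0 ℓ = Set.Icc 0 ℓ := Set.uIcc_of_le hℓ.le
  have hc : ContinuousOn (fun x => (Q x, φ x, ψ x, φ x - ψ x)) (Set.Icc 0 ℓ) :=
    hQcont.prodMk (hφ.prodMk (hψ.prodMk (hφ.sub hψ)))
  have hL := continuous_lhsForm.comp_continuousOn hc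
  have hR := continuous_rhsForm.comp_continuousOn hc
  rw [intervalIntegral.integral_congr (g := fun x => lhsForm (Q x, φ x, ψ x, φ x - ψ x))
    (fun x hx => lhs_eq Q x (hQpos x (hu ▸ hx)) _ _), ← intervalIntegral.integral_const_mul]
  refine intervalIntegral.integral_mono_on hℓ.le ?_ ?_ ?_
  · exact ContinuousOn.intervalIntegrable (by rw [hu]; exact hL)
  · exact ContinuousOn.intervalIntegrable (by rw [hu]; exact continuousOn_const.mul hR)
  · intro x hx
    exact hω _ ⟨x, hx, rfl⟩ _ (mem_ball_of_sqrt α hα _ (hφα x hx)) _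
      (mem_ball_of_sqrt α hα _ (hψα x hx)) _
end

section
/- Let η > 0 and ℓ > 0 be fixed. For any choice of real constants 0 ≤ a < b, there exists an infinitely differentiable function q : ℝ → ℝ such that q(0) = a, q(ℓ) = b, and q'(x) > (q(x) − q(0)) · η for all x ∈ [0, ℓ]. -/
/-- Existence of smooth weight functions (part b)): for `0 ≤ a < b` there is a smooth
`q` with `q 0 = a`, `q ℓ = b` and `q'(x) > (q(x) − q(0)) η` on `[0, ℓ]`. -/
theorem stmt_7 (η ℓ : ℝ) (hη : 0 < η) (hℓ : 0 < ℓ)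
    (a b : ℝ) (ha : 0 ≤ a) (hab : a < b) :
    ∃ q : ℝ → ℝ, ContDiff ℝ (⊤ : ℕ∞) q ∧ q 0 = a ∧ q ℓ = b ∧
      ∀ x ∈ Set.Icc (0 : ℝ) ℓ, deriv q x > (q x - q 0) * η := by
  refine ⟨fun x => a + Real.exp (η * (x - ℓ)) * (x * ((b - a) / ℓ)), ?_, ?_, ?_, ?_⟩
  · fun_prop
  · simp
  · simp only [sub_self, mul_zero, Real.exp_zero]
    field_simp
    ring
  · intro x _
    have h1 : HasDerivAt (fun x : ℝ => η * (x - ℓ)) (η * 1) x :=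
      ((hasDerivAt_id x).sub_const ℓ).const_mul η
    have h2 : HasDerivAt (fun x : ℝ => x * ((b - a) / ℓ)) (1 * ((b - a) / ℓ)) x :=
      (hasDerivAt_id x).mul_const _
    have h3 := (h1.exp.mul h2).const_add a
    have h4 : deriv (fun x => a + Real.exp (η * (x - ℓ)) * (x * ((b - a) / ℓ))) x = _ := h3.deriv
    rw [h4]
    have hc : 0 < Real.exp (η * (x - ℓ)) * ((b - a) / ℓ) :=
      mul_pos (Real.exp_pos _) (div_pos (sub_pos.2 hab) hℓ)
    simp only [zero_mul, mul_zero, add_zero, add_sub_cancel_left, mul_one, one_mul]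
    linarith
end

section
/- Let ℓ > 0 and η > 0 be real numbers and let n be a positive integer such that 2ηℓ < n. Define the polynomial function p_n⁻ : ℝ → ℝ by p_n⁻(x) = −(1/2 − (η/n) x)ⁿ. Then p_n⁻'(x) > (p_n⁻(ℓ) − p_n⁻(x)) · η for all x ∈ (0, ℓ), and p_n⁻(ℓ) − p_n⁻(0) ≤ 1/2ⁿ. -/
/-- The polynomial weight `p_n⁻(x) = −(1/2 − (η/n) x)ⁿ`. -/
noncomputable def pnMinus (η : ℝ) (n : ℕ) : ℝ → ℝ := fun x => -((1 / 2 - (η / n) * x) ^ n)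

/-- Properties of the polynomial weight `p_n⁻` when `2ηℓ < n`. -/
theorem stmt_8 (ℓ η : ℝ) (hℓ : 0 < ℓ) (hη : 0 < η) (n : ℕ) (hn : 0 < n)
    (h2 : 2 * η * ℓ < n) :
    (∀ x ∈ Set.Ioo (0 : ℝ) ℓ,
        deriv (pnMinus η n) x > (pnMinus η n ℓ - pnMinus η n x) * η) ∧
      pnMinus η n ℓ - pnMinus η n 0 ≤ 1 / 2 ^ n := by
  have hn' : (0 : ℝ) < n := by exact_mod_cast hn
  have hb : 0 < 1 / 2 - (η / n) * ℓ := by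
    have : (η / n) * ℓ < 1 / 2 := by
      rw [div_mul_eq_mul_div, div_lt_iff₀ hn']
      linarith
    linarith
  have hbn := pow_pos hb n
  refine ⟨?_, ?_⟩
  · rintro x ⟨hx0, hxl⟩
    have hc : 0 < η / n := div_pos hη hn'
    have h1 : (η / n) * x < (η / n) * ℓ := mul_lt_mul_of_pos_left hxl hc
    have h3 : 0 < (η / n) * x := mul_pos hc hx0
    have hd : HasDerivAt (pnMinus η n) (η * (1 / 2 - (η / n) * x) ^ (n - 1)) x := by
      have h := (((((hasDerivAt_id x).const_mul (η / n)).const_sub (1 / 2)).pow n).neg)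
      refine h.congr_deriv ?_
      simp only [id]
      field_simp
    rw [hd.deriv]
    simp only [pnMinus]
    have ha : 0 < 1 / 2 - (η / n) * x := by linarith
    have hp := pow_pos ha (n - 1)
    have he : (1 / 2 - (η / n) * x) ^ n
        = (1 / 2 - (η / n) * x) ^ (n - 1) * (1 / 2 - (η / n) * x) := by
      rw [← pow_succ, Nat.sub_add_cancel hn]
    have hlt : (1 / 2 - (η / n) * x) ^ n < (1 / 2 - (η / n) * x) ^ (n - 1) := by
      rw [he]
      exact mul_lt_of_lt_one_right hp (by linarith)
    rw [gt_iff_lt, mul_comm]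
    exact mul_lt_mul_of_pos_left (by linarith) hη
  · simp only [pnMinus, mul_zero, sub_zero]
    rw [one_div_pow] at *
    linarith
end

section
/- Let ℓ > 0 and η > 0 be real numbers and let n be a positive integer such that 2ηℓ < n. Define the polynomial function p_n⁺ : ℝ → ℝ by p_n⁺(x) = 1/2ⁿ + (1/2 + (η/n)(x − ℓ))ⁿ. Then p_n⁺'(x) > (p_n⁺(x) − p_n⁺(0)) · η for all x ∈ (0, ℓ), and p_n⁺(ℓ) − p_n⁺(0) ≤ 1/2ⁿ. -/
/-- The polynomial weight `p_n⁺(x) = 1/2ⁿ + (1/2 + (η/n)(x − ℓ))ⁿ`. -/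
noncomputable def pnPlus (η ℓ : ℝ) (n : ℕ) : ℝ → ℝ :=
  fun x => 1 / 2 ^ n + (1 / 2 + (η / n) * (x - ℓ)) ^ n

/-- Properties of the polynomial weight `p_n⁺` when `2ηℓ < n`. -/
theorem stmt_9 (ℓ η : ℝ) (hℓ : 0 < ℓ) (hη : 0 < η) (n : ℕ) (hn : 0 < n)
    (h2 : 2 * η * ℓ < n) :
    (∀ x ∈ Set.Ioo (0 : ℝ) ℓ,
        deriv (pnPlus η ℓ n) x > (pnPlus η ℓ n x - pnPlus η ℓ n 0) * η) ∧
      pnPlus η ℓ n ℓ - pnPlus η ℓ n 0 ≤ 1 / 2 ^ n := by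
  have hn' : (0 : ℝ) < n := by exact_mod_cast hn
  have h0 : 0 < 1 / 2 + (η / n) * (0 - ℓ) := by
    have h : η / n * ℓ < 1 / 2 := by
      rw [div_mul_eq_mul_div, div_lt_iff₀ hn']
      linarith
    linarith
  constructor
  · rintro x ⟨hx0, hxl⟩
    have hc : 0 < η / n := by positivity
    have hq1 : 1 / 2 + (η / n) * (x - ℓ) < 1 := by
      nlinarith [mul_pos hc (sub_pos.2 hxl)]
    have hq0 : 0 < 1 / 2 + (η / n) * (x - ℓ) := by
      nlinarith [mul_pos hc hx0]
    have hd : HasDerivAt (pnPlus η ℓ n)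
        (n * (1 / 2 + (η / n) * (x - ℓ)) ^ (n - 1) * ((η / n) * 1)) x := by
      unfold pnPlus
      exact (((((hasDerivAt_id x).sub_const ℓ).const_mul (η / n)).const_add (1 / 2)).pow
        n).const_add (1 / 2 ^ n)
    rw [hd.deriv]
    simp only [pnPlus]
    have e : n * (1 / 2 + (η / n) * (x - ℓ)) ^ (n - 1) * ((η / n) * 1)
        = (1 / 2 + (η / n) * (x - ℓ)) ^ (n - 1) * η := by
      generalize (1 / 2 + (η / n) * (x - ℓ)) ^ (n - 1) = A
      field_simp
    rw [e]
    apply mul_lt_mul_of_pos_right _ hη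
    have h1 := pow_pos h0 n
    have h3 := pow_le_pow_of_le_one hq0.le hq1.le (Nat.sub_le n 1)
    linarith
  · have h1 := pow_pos h0 n
    simp only [pnPlus, sub_self, mul_zero, add_zero]
    rw [one_div_pow]
    linarith
end

section
/- Let ℓ > 0, T > 0 and n ≥ 1, and let A, B : [0, ℓ] × [0, T] → ℝ^{n×n} be continuously differentiable functions such that the compatibility condition A(x,t) B(x,t) − B(x,t) A(x,t) + (∂ₓ A)(x,t) − (∂ₜ B)(x,t) = 0 holds for all (x,t) ∈ (0, ℓ) × (0, T). Then for every y_in ∈ ℝⁿ there exists exactly one continuously differentiable function y : [0, ℓ] × [0, T] → ℝⁿ satisfying ∂ₜ y(x,t) = A(x,t) y(x,t) and ∂ₓ y(x,t) = B(x,t) y(x,t) for all (x,t) ∈ (0, ℓ) × (0, T), together with y(0, 0) = y_in. -/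
open Matrix

attribute [local instance] Matrix.normedAddCommGroup Matrix.normedSpace

/-- The property of being a C¹ solution on `[0,ℓ] × [0,T]` of the overdetermined system
`∂ₜ y = A y`, `∂ₓ y = B y` on `(0,ℓ) × (0,T)` with `y(0,0) = y_in`. -/
def IsOverdetSol (ℓ T : ℝ) {n : ℕ} (A B : ℝ × ℝ → Matrix (Fin n) (Fin n) ℝ)
    (y_in : Fin n → ℝ) (y : ℝ × ℝ → (Fin n → ℝ)) : Prop :=
  ContDiffOn ℝ 1 y (Set.Icc 0 ℓ ×ˢ Set.Icc 0 T) ∧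
  (∀ p ∈ Set.Ioo (0 : ℝ) ℓ ×ˢ Set.Ioo (0 : ℝ) T,
      fderiv ℝ y p ((0 : ℝ), (1 : ℝ)) = A p *ᵥ y p ∧
      fderiv ℝ y p ((1 : ℝ), (0 : ℝ)) = B p *ᵥ y p) ∧
  y (0, 0) = y_in

section aux
open Set
variable {E : Type*} [NormedAddCommGroup E] [NormedSpace ℝ E]

lemma weighted_bound (M N : ℝ) (hM : 0 < M) (c : ℝ) (hc : 0 ≤ c) (f : ℝ → E)
    (hf : ∀ s, ‖f s‖ ≤ M * N) :
    ‖Real.exp (-(2 * M * c)) • ∫ s in (0:ℝ)..c, Real.exp (2 * M * s) • f s‖ ≤ N / 2 := by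
  have hN : 0 ≤ N := by
    have := (norm_nonneg _).trans (hf 0)
    exact nonneg_of_mul_nonneg_right this hM
  have h1 : ‖∫ s in (0:ℝ)..c, Real.exp (2 * M * s) • f s‖
      ≤ ∫ s in (0:ℝ)..c, Real.exp (2 * M * s) * (M * N) := by
    apply intervalIntegral.norm_integral_le_of_norm_le hc
    · refine Filter.Eventually.of_forall fun s _ => ?_
      rw [norm_smul, Real.norm_of_nonneg (Real.exp_pos _).le]
      exact mul_le_mul_of_nonneg_left (hf s) (Real.exp_pos _).le
    · apply Continuous.intervalIntegrable
      fun_prop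
  have h2 : ∫ s in (0:ℝ)..c, Real.exp (2 * M * s) * (M * N)
      = (Real.exp (2 * M * c) - 1) * (N / 2) := by
    have : ∀ s ∈ uIcc 0 c, HasDerivAt (fun s => Real.exp (2 * M * s) * (N / 2))
        (Real.exp (2 * M * s) * (M * N)) s := by
      intro s _
      have := (((hasDerivAt_id s).const_mul (2 * M)).exp).mul_const (N / 2)
      refine this.congr_deriv ?_
      simp only [id]; ring
    rw [intervalIntegral.integral_eq_sub_of_hasDerivAt this
      (by apply Continuous.intervalIntegrable; fun_prop)]
    simp; ring
  rw [norm_smul, Real.norm_of_nonneg (Real.exp_pos _).le]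
  rw [h2] at h1
  calc _ ≤ Real.exp (-(2 * M * c)) * ((Real.exp (2 * M * c) - 1) * (N / 2)) :=
        mul_le_mul_of_nonneg_left h1 (Real.exp_pos _).le
    _ = (1 - Real.exp (-(2 * M * c))) * (N / 2) := by
        rw [← mul_assoc, mul_sub, ← Real.exp_add]; simp
    _ ≤ N / 2 := by
        have := Real.exp_pos (-(2 * M * c))
        nlinarith

open BoundedContinuousFunction in
lemma volterra [CompleteSpace E] (a : ℝ → ℝ → E →L[ℝ] E)
    (ha : Continuous (Function.uncurry a)) (M : ℝ) (hM0 : 0 < M) (hM : ∀ x t, ‖a x t‖ ≤ M)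
    (g : ℝ → E) (hg : Continuous g) (G : ℝ) (hG : ∀ x, ‖g x‖ ≤ G) (T : ℝ) (hT : 0 ≤ T) :
    ∃ y : ℝ → ℝ → E, Continuous (Function.uncurry y) ∧
      ∀ x, ∀ t ∈ Icc 0 T, y x t = g x + ∫ s in (0:ℝ)..t, a x s (y x s) := by
  set c : ℝ → ℝ := fun t => max 0 (min t T) with hc
  have hcc : Continuous c := by fun_prop
  have hc0 : ∀ t, 0 ≤ c t := fun t => le_max_left _ _
  have hcT : ∀ t ∈ Icc 0 T, c t = t := by
    rintro t ⟨h1, h2⟩; simp [hc, h1, h2]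
  have ha' : Continuous fun p : ℝ × ℝ => a p.1 p.2 := ha
  have hI : ∀ z : (ℝ × ℝ) →ᵇ E, Continuous fun p : ℝ × ℝ =>
      ∫ s in (0:ℝ)..c p.2, Real.exp (2 * M * s) • a p.1 s (z (p.1, s)) := by
    intro z
    apply intervalIntegral.continuous_parametric_intervalIntegral_of_continuous
    · have h1 : Continuous fun q : (ℝ × ℝ) × ℝ => a q.1.1 q.2 :=
        ha'.comp (f := fun q : (ℝ × ℝ) × ℝ => (q.1.1, q.2)) (by fun_prop)
      have h2 : Continuous fun q : (ℝ × ℝ) × ℝ => z (q.1.1, q.2) := by fun_prop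
      exact (show Continuous fun q : (ℝ × ℝ) × ℝ => Real.exp (2 * M * q.2) by fun_prop).smul
        (h1.clm_apply h2)
    · fun_prop
  have hb : ∀ (z : (ℝ × ℝ) →ᵇ E) x s, ‖a x s (z (x, s))‖ ≤ M * ‖z‖ := fun z x s =>
    (a x s).le_of_opNorm_le_of_le (hM x s) (z.norm_coe_le_norm _)
  let F : ((ℝ × ℝ) →ᵇ E) → ((ℝ × ℝ) →ᵇ E) := fun z =>
    BoundedContinuousFunction.ofNormedAddCommGroup
      (fun p => Real.exp (-(2 * M * c p.2)) • g p.1 + Real.exp (-(2 * M * c p.2)) •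
        ∫ s in (0:ℝ)..c p.2, Real.exp (2 * M * s) • a p.1 s (z (p.1, s)))
      (by have := hI z; fun_prop) (G + ‖z‖ / 2) (by
        intro p
        refine (norm_add_le _ _).trans (add_le_add ?_ ?_)
        · rw [norm_smul, Real.norm_of_nonneg (Real.exp_pos _).le]
          have h1 : Real.exp (-(2 * M * c p.2)) ≤ 1 := by
            rw [Real.exp_le_one_iff]; have := hc0 p.2; simp; positivity
          have := hG p.1
          have h3 := norm_nonneg (g p.1)
          nlinarith
        · exact weighted_bound M _ hM0 _ (hc0 _) _ (fun s => hb z p.1 s))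
  have hF : ContractingWith (1/2) F := by
    refine ⟨by
      rw [← NNReal.coe_lt_coe]; norm_num, ?_⟩
    apply LipschitzWith.of_dist_le_mul
    intro z w
    rw [BoundedContinuousFunction.dist_le (by positivity)]
    intro p
    have hIntg : ∀ z : (ℝ × ℝ) →ᵇ E, IntervalIntegrable
        (fun s => Real.exp (2 * M * s) • a p.1 s (z (p.1, s))) MeasureTheory.volume 0 (c p.2) := by
      intro z
      apply Continuous.intervalIntegrable
      have h1 : Continuous fun s => a p.1 s :=
        ha'.comp (f := fun s => (p.1, s)) (by fun_prop)
      have h2 : Continuous fun s => z (p.1, s) := by fun_prop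
      exact (show Continuous fun q : ℝ => Real.exp (2 * M * q) by fun_prop).smul
        (h1.clm_apply h2)
    have := weighted_bound M ‖z - w‖ hM0 (c p.2) (hc0 _) _ (fun s => hb (z - w) p.1 s)
    rw [dist_eq_norm, dist_eq_norm]
    have e : F z p - F w p = Real.exp (-(2 * M * c p.2)) • ∫ s in (0:ℝ)..c p.2,
        Real.exp (2 * M * s) • a p.1 s ((z - w) (p.1, s)) := by
      simp only [F, BoundedContinuousFunction.coe_ofNormedAddCommGroup, BoundedContinuousFunction.sub_apply,
        map_sub, smul_sub]
      rw [intervalIntegral.integral_sub (hIntg z) (hIntg w), smul_sub]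
      abel
    rw [e]
    refine this.trans (le_of_eq ?_)
    simp; ring
  obtain ⟨z, hz, -⟩ := hF.exists_fixedPoint 0 (edist_ne_top _ _)
  refine ⟨fun x t => Real.exp (2 * M * c t) • z (x, t), ?_, ?_⟩
  · change Continuous fun p : ℝ × ℝ => Real.exp (2 * M * c p.2) • z (p.1, p.2)
    fun_prop
  · intro x t ht
    have h : z (x, t) = F z (x, t) := by rw [hz]
    simp only
    rw [h]
    simp only [F, BoundedContinuousFunction.coe_ofNormedAddCommGroup]
    rw [← smul_add, smul_smul, ← Real.exp_add, add_neg_cancel, Real.exp_zero, one_smul, hcT t ht]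
    congr 1
    apply intervalIntegral.integral_congr
    intro s hs
    rw [uIcc_of_le ht.1] at hs
    simp only
    rw [hcT s ⟨hs.1, hs.2.trans ht.2⟩, map_smul]

lemma volterra_zero (ℓ T : ℝ) (d h : ℝ → ℝ → E) (D C : ℝ)
    (hD : ∀ x ∈ Icc 0 ℓ, ∀ t ∈ Icc 0 T, ‖d x t‖ ≤ D)
    (hd : ∀ x ∈ Icc 0 ℓ, ∀ t ∈ Icc 0 T, d x t = ∫ s in (0:ℝ)..t, h x s)
    (hh : ∀ s ∈ Icc 0 T, ∀ K, (∀ ξ ∈ Icc 0 ℓ, ‖d ξ s‖ ≤ K) → ∀ x ∈ Icc 0 ℓ, ‖h x s‖ ≤ C * K) :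
    ∀ x ∈ Icc 0 ℓ, ∀ t ∈ Icc 0 T, d x t = 0 := by
  have key : ∀ k : ℕ, ∀ x ∈ Icc 0 ℓ, ∀ t ∈ Icc 0 T,
      ‖d x t‖ ≤ D * ((C * t) ^ k / (k.factorial : ℝ)) := by
    intro k
    induction k with
    | zero => simpa using hD
    | succ k ih =>
      intro x hx t ht
      rw [hd x hx t ht]
      have h1 : ‖∫ s in (0:ℝ)..t, h x s‖
          ≤ ∫ s in (0:ℝ)..t, C * (D * ((C * s) ^ k / (k.factorial : ℝ))) := by
        apply intervalIntegral.norm_integral_le_of_norm_le ht.1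
        · refine Filter.Eventually.of_forall fun s hs => ?_
          have hs' : s ∈ Icc 0 T := ⟨hs.1.le, hs.2.trans ht.2⟩
          exact hh s hs' _ (fun ξ hξ => ih ξ hξ s hs') x hx
        · apply Continuous.intervalIntegrable
          fun_prop
      refine h1.trans (le_of_eq ?_)
      have : ∀ s ∈ uIcc 0 t, HasDerivAt
          (fun s => D * ((C * s) ^ (k + 1) / ((k + 1).factorial : ℝ)))
          (C * (D * ((C * s) ^ k / (k.factorial : ℝ)))) s := by
        intro s _
        have := (((((hasDerivAt_id s).const_mul C).pow (k + 1)).div_const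
          ((k + 1).factorial : ℝ)).const_mul D)
        refine this.congr_deriv ?_
        rw [Nat.factorial_succ]
        push_cast
        have h2 : (k.factorial : ℝ) ≠ 0 := by positivity
        have h3 : ((k : ℝ) + 1) ≠ 0 := by positivity
        simp only [id]
        field_simp
      rw [intervalIntegral.integral_eq_sub_of_hasDerivAt this
        (by apply Continuous.intervalIntegrable; fun_prop)]
      simp
  intro x hx t ht
  have hl := (FloorSemiring.tendsto_pow_div_factorial_atTop (C * t)).const_mul D
  rw [mul_zero] at hl
  have := ge_of_tendsto' hl (fun k => key k x hx t ht)
  simpa using this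

lemma exist_core [CompleteSpace E] (ℓ T : ℝ) (hℓ : 0 < ℓ) (hT : 0 < T)
    (a b ax : ℝ → ℝ → E →L[ℝ] E)
    (ha : Continuous fun p : ℝ × ℝ => a p.1 p.2) (hb : Continuous fun p : ℝ × ℝ => b p.1 p.2)
    (hax : Continuous fun p : ℝ × ℝ => ax p.1 p.2)
    (M : ℝ) (hM0 : 0 < M) (hMa : ∀ x t, ‖a x t‖ ≤ M) (hMb : ∀ x t, ‖b x t‖ ≤ M)
    (hMax : ∀ x t, ‖ax x t‖ ≤ M)
    (hda : ∀ x ∈ Ioo 0 ℓ, ∀ t ∈ Ioo 0 T, HasDerivAt (fun x' => a x' t) (ax x t) x)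
    (hdb : ∀ x ∈ Ioo 0 ℓ, ∀ t ∈ Ioo 0 T, HasDerivAt (fun t' => b x t')
      (a x t * b x t - b x t * a x t + ax x t) t)
    (y0 : E) :
    ∃ y : ℝ → ℝ → E, (Continuous fun p : ℝ × ℝ => y p.1 p.2) ∧ y 0 0 = y0 ∧
      ∀ x ∈ Ioo 0 ℓ, ∀ t ∈ Ioo 0 T, HasDerivAt (fun x' => y x' t) (b x t (y x t)) x ∧
        HasDerivAt (fun t' => y x t') (a x t (y x t)) t := by
  -- initial profile
  obtain ⟨y1, hy1c, hy1⟩ := volterra (fun _ s => b s 0)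
    (hb.comp (f := fun p : ℝ × ℝ => (p.2, (0:ℝ))) (by fun_prop)) M hM0 (fun _ s => hMb s 0)
    (fun _ => y0) continuous_const ‖y0‖ (fun _ => le_rfl) ℓ hℓ.le
  have hy1c' : Continuous fun p : ℝ × ℝ => y1 p.1 p.2 := hy1c
  have hy10 : Continuous fun x => y1 0 x :=
    hy1c'.comp (f := fun x : ℝ => ((0:ℝ), x)) (by fun_prop)
  set c : ℝ → ℝ := fun t => max 0 (min t ℓ) with hc
  have hcc : Continuous c := by fun_prop
  have hcm : ∀ t, c t ∈ Icc 0 ℓ := fun t => ⟨le_max_left _ _, max_le hℓ.le (min_le_right _ _)⟩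
  have hcT : ∀ t ∈ Icc 0 ℓ, c t = t := by
    rintro t ⟨h1, h2⟩; simp [hc, h1, h2]
  obtain ⟨G, hG⟩ := (isCompact_Icc (a := (0:ℝ)) (b := ℓ)).exists_bound_of_continuousOn
    hy10.continuousOn
  set g : ℝ → E := fun x => y1 0 (c x) with hgdef
  have hgc : Continuous g := hy10.comp hcc
  have hg : ∀ x ∈ Icc 0 ℓ, g x = y0 + ∫ s in (0:ℝ)..x, b s 0 (g s) := by
    intro x hx
    simp only [hgdef]
    rw [hcT x hx, hy1 0 x hx]
    congr 1
    apply intervalIntegral.integral_congr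
    intro s hs
    rw [uIcc_of_le hx.1] at hs
    simp only
    rw [hcT s ⟨hs.1, hs.2.trans hx.2⟩]
  obtain ⟨y, hyc, hy⟩ := volterra a ha M hM0 hMa g hgc G (fun x => hG _ (hcm x)) T hT.le
  replace hyc : Continuous fun p : ℝ × ℝ => y p.1 p.2 := hyc
  -- slices
  have slx : ∀ {F : Type _} [TopologicalSpace F] {f : ℝ → ℝ → F},
      (Continuous fun p : ℝ × ℝ => f p.1 p.2) → ∀ t, Continuous fun x => f x t :=
    fun hf t => hf.comp (f := fun x : ℝ => (x, t)) (by fun_prop)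
  have slt : ∀ {F : Type _} [TopologicalSpace F] {f : ℝ → ℝ → F},
      (Continuous fun p : ℝ × ℝ => f p.1 p.2) → ∀ x, Continuous fun t => f x t :=
    fun hf x => hf.comp (f := fun t : ℝ => (x, t)) (by fun_prop)
  have h0ℓ : (0:ℝ) ∈ Icc 0 ℓ := ⟨le_rfl, hℓ.le⟩
  have h0T : (0:ℝ) ∈ Icc 0 T := ⟨le_rfl, hT.le⟩
  have hy_0 : ∀ x, y x 0 = g x := fun x => by rw [hy x 0 h0T]; simp
  have hg0 : g 0 = y0 := by rw [hg 0 h0ℓ]; simp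
  set w : ℝ → ℝ → E := fun x t => b x t (y x t) with hw
  have hwc : Continuous fun p : ℝ × ℝ => w p.1 p.2 := hb.clm_apply hyc
  set F : ℝ → ℝ → E := fun x t => a x t (w x t) + ax x t (y x t) with hF
  have hFc : Continuous fun p : ℝ × ℝ => F p.1 p.2 :=
    (ha.clm_apply hwc).add (hax.clm_apply hyc)
  have hayc : Continuous fun p : ℝ × ℝ => a p.1 p.2 (y p.1 p.2) := ha.clm_apply hyc
  have hays : ∀ x, Continuous fun t => a x t (y x t) :=
    slt (f := fun x t => a x t (y x t)) hayc
  have hyt : ∀ x, ∀ t ∈ Ioo 0 T, HasDerivAt (fun t' => y x t') (a x t (y x t)) t := by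
    intro x t ht
    have h1 : HasDerivAt (fun t' => g x + ∫ s in (0:ℝ)..t', a x s (y x s)) (a x t (y x t)) t :=
      ((hays x).integral_hasStrictDerivAt 0 t).hasDerivAt.const_add _
    refine h1.congr_of_eventuallyEq ?_
    filter_upwards [Ioo_mem_nhds ht.1 ht.2] with t' ht'
    exact hy x t' ⟨ht'.1.le, ht'.2.le⟩
  have hwint : ∀ x ∈ Ioo 0 ℓ, ∀ t ∈ Icc 0 T,
      w x t = w x 0 + ∫ s in (0:ℝ)..t, F x s := by
    intro x hx t ht
    have : ∀ s ∈ Ioo 0 t, HasDerivAt (fun s => w x s) (F x s) s := by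
      intro s hs
      have hs' : s ∈ Ioo 0 T := ⟨hs.1, hs.2.trans_le ht.2⟩
      refine ((hdb x hx s hs').clm_apply (hyt x s hs')).congr_deriv ?_
      simp only [hF, hw, _root_.add_apply, _root_.sub_apply,
        mul_apply_eq_comp]
      abel
    rw [intervalIntegral.integral_eq_sub_of_hasDerivAt_of_le ht.1 (slt hwc x).continuousOn this
      ((slt hFc x).intervalIntegrable _ _)]
    abel
  set Y : ℝ → ℝ → E := fun x t => y 0 t + ∫ ξ in (0:ℝ)..x, w ξ t with hY
  have hYc : Continuous fun p : ℝ × ℝ => Y p.1 p.2 := by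
    refine ((slt hyc 0).comp continuous_snd).add ?_
    apply intervalIntegral.continuous_parametric_intervalIntegral_of_continuous
      (f := fun (p : ℝ × ℝ) ξ => w ξ p.2)
    · exact hwc.comp (f := fun q : (ℝ × ℝ) × ℝ => (q.2, q.1.2)) (by fun_prop)
    · fun_prop
  have hYx : ∀ x t, HasDerivAt (fun x' => Y x' t) (w x t) x := fun x t =>
    ((slx hwc t).integral_hasStrictDerivAt 0 x).hasDerivAt.const_add _
  set d : ℝ → ℝ → E := fun x t => Y x t - y x t with hd
  have hdc : Continuous fun p : ℝ × ℝ => d p.1 p.2 := hYc.sub hyc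
  set h : ℝ → ℝ → E := fun x s => a x s (d x s) - ∫ ξ in (0:ℝ)..x, ax ξ s (d ξ s) with hh
  have hIF : Continuous fun p : ℝ × ℝ => ∫ ξ in (0:ℝ)..p.1, F ξ p.2 := by
    apply intervalIntegral.continuous_parametric_intervalIntegral_of_continuous
      (f := fun (p : ℝ × ℝ) ξ => F ξ p.2)
    · exact hFc.comp (f := fun q : (ℝ × ℝ) × ℝ => (q.2, q.1.2)) (by fun_prop)
    · fun_prop
  -- bracket identity
  have hbr : ∀ x ∈ Icc 0 ℓ, ∀ s ∈ Ioo 0 T,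
      a 0 s (y 0 s) + (∫ ξ in (0:ℝ)..x, F ξ s) - a x s (y x s) = h x s := by
    intro x hx s hs
    have h1 : ∫ ξ in (0:ℝ)..x, (ax ξ s (Y ξ s) + a ξ s (w ξ s))
        = a x s (Y x s) - a 0 s (Y 0 s) := by
      apply intervalIntegral.integral_eq_sub_of_hasDerivAt_of_le hx.1
      · exact (slx (f := fun x s => a x s (Y x s)) (ha.clm_apply hYc) s).continuousOn
      · intro ξ hξ
        exact (hda ξ ⟨hξ.1, hξ.2.trans_le hx.2⟩ s hs).clm_apply (hYx ξ s)
      · exact (slx (f := fun x s => ax x s (Y x s) + a x s (w x s))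
          ((hax.clm_apply hYc).add (ha.clm_apply hwc)) s).intervalIntegrable _ _
    have h2 : ∫ ξ in (0:ℝ)..x, ax ξ s (d ξ s)
        = (∫ ξ in (0:ℝ)..x, (ax ξ s (Y ξ s) + a ξ s (w ξ s))) - ∫ ξ in (0:ℝ)..x, F ξ s := by
      rw [← intervalIntegral.integral_sub]
      · apply intervalIntegral.integral_congr
        intro ξ _
        simp only [hd, hF, map_sub]
        abel
      · exact (slx (f := fun x s => ax x s (Y x s) + a x s (w x s))
          ((hax.clm_apply hYc).add (ha.clm_apply hwc)) s).intervalIntegrable _ _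
      · exact (slx hFc s).intervalIntegrable _ _
    have h3 : Y 0 s = y 0 s := by simp [hY]
    simp only [hh]
    rw [h2, h1, h3]
    simp only [hd, map_sub]
    abel
  have hdint : ∀ x ∈ Icc 0 ℓ, ∀ t ∈ Icc 0 T, d x t = ∫ s in (0:ℝ)..t, h x s := by
    intro x hx t ht
    have h1 : ∫ s in (0:ℝ)..t, h x s = ∫ s in (0:ℝ)..t,
        (a 0 s (y 0 s) + (∫ ξ in (0:ℝ)..x, F ξ s) - a x s (y x s)) := by
      rw [intervalIntegral.integral_of_le ht.1, intervalIntegral.integral_of_le ht.1,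
        MeasureTheory.integral_Ioc_eq_integral_Ioo, MeasureTheory.integral_Ioc_eq_integral_Ioo]
      apply MeasureTheory.setIntegral_congr_fun measurableSet_Ioo
      intro s hs
      exact (hbr x hx s ⟨hs.1, hs.2.trans_le ht.2⟩).symm
    have h2 : ∫ ξ in (0:ℝ)..x, w ξ t = ∫ ξ in (0:ℝ)..x, (w ξ 0 + ∫ s in (0:ℝ)..t, F ξ s) := by
      rw [intervalIntegral.integral_of_le hx.1, intervalIntegral.integral_of_le hx.1,
        MeasureTheory.integral_Ioc_eq_integral_Ioo, MeasureTheory.integral_Ioc_eq_integral_Ioo]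
      apply MeasureTheory.setIntegral_congr_fun measurableSet_Ioo
      intro s hs
      exact hwint s ⟨hs.1, hs.2.trans_le hx.2⟩ t ht
    have hIF2 : Continuous fun ξ : ℝ => ∫ s in (0:ℝ)..t, F ξ s := by
      apply intervalIntegral.continuous_parametric_intervalIntegral_of_continuous' (f := F) hFc
    have h3 : ∫ ξ in (0:ℝ)..x, w ξ 0 = g x - y0 := by
      rw [hg x hx, add_sub_cancel_left]
      apply intervalIntegral.integral_congr
      intro ξ _
      simp only [hw, hy_0]
    have h4 : ∫ ξ in (0:ℝ)..x, ∫ s in (0:ℝ)..t, F ξ s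
        = ∫ s in (0:ℝ)..t, ∫ ξ in (0:ℝ)..x, F ξ s := by
      apply MeasureTheory.intervalIntegral_intervalIntegral_swap
      refine (hFc.continuousOn.integrableOn_compact
        ((isCompact_uIcc (a := (0:ℝ)) (b := x)).prod
          (isCompact_uIcc (a := (0:ℝ)) (b := t)))).mono_set ?_
      exact prod_mono uIoc_subset_uIcc uIoc_subset_uIcc
    rw [h1, intervalIntegral.integral_sub, intervalIntegral.integral_add]
    · simp only [hd, hY]
      rw [h2, intervalIntegral.integral_add, h3, h4, hy 0 t ht, hy x t ht, hg0]
      · abel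
      · exact (slx hwc 0).intervalIntegrable _ _
      · exact hIF2.intervalIntegrable _ _
    · exact (hays 0).intervalIntegrable _ _
    · exact (slt (f := fun x s => ∫ ξ in (0:ℝ)..x, F ξ s) hIF x).intervalIntegrable _ _
    · exact ((hays 0).add
        (slt (f := fun x s => ∫ ξ in (0:ℝ)..x, F ξ s) hIF x)).intervalIntegrable _ _
    · exact (hays x).intervalIntegrable _ _
  obtain ⟨D, hD⟩ := ((isCompact_Icc (a := (0:ℝ)) (b := ℓ)).prod
    (isCompact_Icc (a := (0:ℝ)) (b := T))).exists_bound_of_continuousOn hdc.continuousOn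
  have hd0 := volterra_zero ℓ T d h D (M + M * ℓ) (fun x hx t ht => hD (x, t) ⟨hx, ht⟩) hdint (by
    intro s hs K hK x hx
    have hK0 : 0 ≤ K := (norm_nonneg _).trans (hK 0 h0ℓ)
    have h1 : ‖a x s (d x s)‖ ≤ M * K :=
      (a x s).le_of_opNorm_le_of_le (hMa x s) (hK x hx)
    have h2 : ‖∫ ξ in (0:ℝ)..x, ax ξ s (d ξ s)‖ ≤ M * K * |x - 0| := by
      apply intervalIntegral.norm_integral_le_of_norm_le_const
      intro ξ hξ
      rw [uIoc_of_le hx.1] at hξ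
      exact (ax ξ s).le_of_opNorm_le_of_le (hMax ξ s) (hK ξ ⟨hξ.1.le, hξ.2.trans hx.2⟩)
    rw [sub_zero, abs_of_nonneg hx.1] at h2
    have h3 : M * K * x ≤ M * K * ℓ := mul_le_mul_of_nonneg_left hx.2 (by positivity)
    have h4 := norm_sub_le (a x s (d x s)) (∫ ξ in (0:ℝ)..x, ax ξ s (d ξ s))
    simp only [hh]
    linarith)
  refine ⟨y, hyc, by rw [hy_0, hg0], fun x hx t ht => ⟨?_, hyt x t ht⟩⟩
  refine (hYx x t).congr_of_eventuallyEq ?_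
  filter_upwards [Ioo_mem_nhds hx.1 hx.2] with x' hx'
  have := hd0 x' ⟨hx'.1.le, hx'.2.le⟩ t ⟨ht.1.le, ht.2.le⟩
  exact (sub_eq_zero.1 this).symm

lemma unique_E (ℓ T : ℝ) (hℓ : 0 < ℓ) (hT : 0 < T) (A B : ℝ × ℝ → E →L[ℝ] E)
    (hA : ContinuousOn A (Icc 0 ℓ ×ˢ Icc 0 T)) (hB : ContinuousOn B (Icc 0 ℓ ×ˢ Icc 0 T))
    (d : ℝ × ℝ → E) (hd : ContinuousOn d (Icc 0 ℓ ×ˢ Icc 0 T)) (hd0 : d (0, 0) = 0)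
    (hdiff : ∀ p ∈ Ioo 0 ℓ ×ˢ Ioo 0 T, DifferentiableAt ℝ d p)
    (heq : ∀ p ∈ Ioo 0 ℓ ×ˢ Ioo 0 T, fderiv ℝ d p ((0 : ℝ), (1 : ℝ)) = A p (d p) ∧
      fderiv ℝ d p ((1 : ℝ), (0 : ℝ)) = B p (d p)) :
    ∀ p ∈ Icc 0 ℓ ×ˢ Icc 0 T, d p = 0 := by
  have hKc : IsCompact (Icc 0 ℓ ×ˢ Icc 0 T) := isCompact_Icc.prod isCompact_Icc
  obtain ⟨MA, hMA⟩ := hKc.exists_bound_of_continuousOn hA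
  obtain ⟨MB, hMB⟩ := hKc.exists_bound_of_continuousOn hB
  have hcl : closure (Ioo 0 ℓ ×ˢ Ioo 0 T) = Icc 0 ℓ ×ˢ Icc 0 T := by
    rw [closure_prod_eq, closure_Ioo hℓ.ne, closure_Ioo hT.ne]
  have hsub : Ioo 0 ℓ ×ˢ Ioo 0 T ⊆ Icc 0 ℓ ×ˢ Icc 0 T :=
    prod_mono Ioo_subset_Icc_self Ioo_subset_Icc_self
  have hIntg : ∀ p ∈ Ioo 0 ℓ ×ˢ Ioo 0 T, d p = 0 := by
    rintro ⟨x, t⟩ ⟨⟨hx0, hxℓ⟩, ⟨ht0, htT⟩⟩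
    simp only at hx0 hxℓ ht0 htT
    have hray : ∀ s ∈ Ioc (0:ℝ) 1, (s * x, s * t) ∈ Ioo 0 ℓ ×ˢ Ioo 0 T := by
      rintro s ⟨hs0, hs1⟩
      refine ⟨⟨by positivity, ?_⟩, ⟨by positivity, ?_⟩⟩ <;> simp only <;> nlinarith
    have hray0 : ∀ s ∈ Icc (0:ℝ) 1, (s * x, s * t) ∈ Icc 0 ℓ ×ˢ Icc 0 T := by
      rintro s ⟨hs0, hs1⟩
      refine ⟨⟨by positivity, ?_⟩, ⟨by positivity, ?_⟩⟩ <;> simp only <;> nlinarith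
    have hcont : ContinuousOn (fun s : ℝ => d (s * x, s * t)) (Icc 0 1) :=
      hd.comp (by fun_prop) hray0
    have hder : ∀ s ∈ Ioc (0:ℝ) 1, HasDerivAt (fun s : ℝ => d (s * x, s * t))
        (x • B (s * x, s * t) (d (s * x, s * t)) + t • A (s * x, s * t) (d (s * x, s * t))) s := by
      intro s hs
      have h1 := (hdiff _ (hray s hs)).hasFDerivAt
      have h2 : HasDerivAt (fun s : ℝ => (s * x, s * t)) (x, t) s := by
        have := ((hasDerivAt_id s).mul_const x).prodMk ((hasDerivAt_id s).mul_const t)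
        simpa using this
      refine (h1.comp_hasDerivAt s h2).congr_deriv ?_
      obtain ⟨e1, e2⟩ := heq _ (hray s hs)
      rw [← e1, ← e2, ← map_smul, ← map_smul, ← map_add]
      simp
    set K := x * |MB| + t * |MA| with hK
    have hK0 : 0 ≤ K := by positivity
    have hbound : ∀ ε ∈ Ioc (0:ℝ) 1,
        ‖d (x, t)‖ ≤ ‖d (ε * x, ε * t)‖ * Real.exp K := by
      intro ε hε
      have := norm_le_gronwallBound_of_norm_deriv_right_le (a := ε) (b := 1)
        (f := fun s : ℝ => d (s * x, s * t)) (δ := ‖d (ε * x, ε * t)‖) (K := K) (ε := 0)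
        (hcont.mono (Icc_subset_Icc_left hε.1.le))
        (fun s hs => (hder s ⟨hε.1.trans_le hs.1, hs.2.le⟩).hasDerivWithinAt) le_rfl
        (by
          intro s hs
          have hs' := hsub (hray s ⟨hε.1.trans_le hs.1, hs.2.le⟩)
          have n1 := (B (s * x, s * t)).le_of_opNorm_le ((hMB _ hs').trans (le_abs_self _))
            (d (s * x, s * t))
          have n2 := (A (s * x, s * t)).le_of_opNorm_le ((hMA _ hs').trans (le_abs_self _))
            (d (s * x, s * t))
          refine (norm_add_le _ _).trans ?_
          rw [norm_smul, norm_smul, Real.norm_of_nonneg hx0.le, Real.norm_of_nonneg ht0.le]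
          have := mul_le_mul_of_nonneg_left n1 hx0.le
          have := mul_le_mul_of_nonneg_left n2 ht0.le
          simp only [hK]
          linarith) 1 ⟨hε.2, le_rfl⟩
      rw [gronwallBound_ε0] at this
      simp only [one_mul] at this
      refine this.trans (mul_le_mul_of_nonneg_left ?_ (norm_nonneg _))
      apply Real.exp_le_exp.2
      have := hε.1
      nlinarith
    have hlim : Filter.Tendsto (fun ε : ℝ => ‖d (ε * x, ε * t)‖ * Real.exp K)
        (nhdsWithin 0 (Ioc 0 1)) (nhds 0) := by
      have h1 := ((hcont 0 ⟨le_rfl, zero_le_one⟩).mono Ioc_subset_Icc_self).norm.mul_const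
        (Real.exp K)
      simpa [ContinuousWithinAt, hd0] using h1
    have : (nhdsWithin (0:ℝ) (Ioc 0 1)).NeBot := by
      rw [nhdsWithin_Ioc_eq_nhdsGT zero_lt_one]; infer_instance
    have h0 := ge_of_tendsto hlim (Filter.eventually_of_mem self_mem_nhdsWithin hbound)
    simpa using h0
  intro p hp
  have hp' := hp
  rw [← hcl, mem_closure_iff_nhdsWithin_neBot] at hp'
  have h1 : Filter.Tendsto d (nhdsWithin p (Ioo 0 ℓ ×ˢ Ioo 0 T)) (nhds (d p)) :=
    (hd p hp).mono hsub
  have h2 : Filter.Tendsto d (nhdsWithin p (Ioo 0 ℓ ×ˢ Ioo 0 T)) (nhds 0) :=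
    tendsto_const_nhds.congr' (Filter.eventually_of_mem self_mem_nhdsWithin
      fun q hq => (hIntg q hq).symm)
  exact tendsto_nhds_unique h1 h2

lemma exist_E [CompleteSpace E] (ℓ T : ℝ) (hℓ : 0 < ℓ) (hT : 0 < T) (A B : ℝ × ℝ → E →L[ℝ] E)
    (hA : ContDiffOn ℝ 1 A (Icc 0 ℓ ×ˢ Icc 0 T)) (hB : ContDiffOn ℝ 1 B (Icc 0 ℓ ×ˢ Icc 0 T))
    (hcompat : ∀ p ∈ Ioo (0 : ℝ) ℓ ×ˢ Ioo (0 : ℝ) T,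
      A p * B p - B p * A p
        + fderiv ℝ A p ((1 : ℝ), (0 : ℝ)) - fderiv ℝ B p ((0 : ℝ), (1 : ℝ)) = 0) (y0 : E) :
    ∃ y : ℝ × ℝ → E, ContDiffOn ℝ 1 y (Icc 0 ℓ ×ˢ Icc 0 T) ∧
      (∀ p ∈ Ioo 0 ℓ ×ˢ Ioo 0 T, fderiv ℝ y p ((0 : ℝ), (1 : ℝ)) = A p (y p) ∧
      fderiv ℝ y p ((1 : ℝ), (0 : ℝ)) = B p (y p)) ∧ y (0, 0) = y0 := by
  set K := Icc 0 ℓ ×ˢ Icc 0 T with hK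
  have hKc : IsCompact K := isCompact_Icc.prod isCompact_Icc
  have hcl : closure (Ioo 0 ℓ ×ˢ Ioo 0 T) = K := by
    rw [closure_prod_eq, closure_Ioo hℓ.ne, closure_Ioo hT.ne]
  have hsub : Ioo 0 ℓ ×ˢ Ioo 0 T ⊆ K :=
    prod_mono Ioo_subset_Icc_self Ioo_subset_Icc_self
  have hopen : IsOpen (Ioo 0 ℓ ×ˢ Ioo 0 T) := isOpen_Ioo.prod isOpen_Ioo
  have hu : UniqueDiffOn ℝ K := (uniqueDiffOn_Icc hℓ).prod (uniqueDiffOn_Icc hT)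
  have hnhds : ∀ p ∈ Ioo 0 ℓ ×ˢ Ioo 0 T, K ∈ nhds p := fun p hp =>
    Filter.mem_of_superset (hopen.mem_nhds hp) hsub
  have hA' : ContinuousOn (fun p => fderivWithin ℝ A K p ((1:ℝ), (0:ℝ))) K :=
    (hA.continuousOn_fderivWithin hu le_rfl).clm_apply continuousOn_const
  obtain ⟨MA, hMA⟩ := hKc.exists_bound_of_continuousOn hA.continuousOn
  obtain ⟨MB, hMB⟩ := hKc.exists_bound_of_continuousOn hB.continuousOn
  obtain ⟨MX, hMX⟩ := hKc.exists_bound_of_continuousOn hA'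
  set c : ℝ × ℝ → ℝ × ℝ := fun p => (max 0 (min p.1 ℓ), max 0 (min p.2 T)) with hc
  have hcc : Continuous c := by fun_prop
  have hcm : ∀ p, c p ∈ K := fun p => ⟨⟨le_max_left _ _, max_le hℓ.le (min_le_right _ _)⟩,
    ⟨le_max_left _ _, max_le hT.le (min_le_right _ _)⟩⟩
  have hcK : ∀ p ∈ K, c p = p := by
    rintro ⟨x, t⟩ ⟨⟨h1, h2⟩, ⟨h3, h4⟩⟩
    simp only at h1 h2 h3 h4
    simp [hc, h1, h2, h3, h4]
  have hcont : ∀ {F : Type _} [TopologicalSpace F] {f : ℝ × ℝ → F}, ContinuousOn f K →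
      Continuous fun p : ℝ × ℝ => f (c (p.1, p.2)) := fun hf =>
    hf.comp_continuous hcc hcm
  have hcx : ∀ x ∈ Ioo 0 ℓ, ∀ t ∈ Ioo 0 T, ∀ᶠ x' in nhds x, c (x', t) = (x', t) := by
    intro x hx t ht
    filter_upwards [Ioo_mem_nhds hx.1 hx.2] with x' hx'
    exact hcK _ (hsub ⟨hx', ht⟩)
  have hct : ∀ x ∈ Ioo 0 ℓ, ∀ t ∈ Ioo 0 T, ∀ᶠ t' in nhds t, c (x, t') = (x, t') := by
    intro x hx t ht
    filter_upwards [Ioo_mem_nhds ht.1 ht.2] with t' ht'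
    exact hcK _ (hsub ⟨hx, ht'⟩)
  obtain ⟨y, hyc, hy0, hy⟩ := exist_core ℓ T hℓ hT (fun x t => A (c (x, t)))
    (fun x t => B (c (x, t))) (fun x t => fderivWithin ℝ A K (c (x, t)) ((1:ℝ), (0:ℝ)))
    (hcont hA.continuousOn) (hcont hB.continuousOn) (hcont hA')
    (1 + |MA| + |MB| + |MX|) (by positivity)
    (fun x t => by
      have := hMA _ (hcm (x, t))
      have := le_abs_self MA
      have := abs_nonneg MB
      have := abs_nonneg MX
      linarith)
    (fun x t => by
      have := hMB _ (hcm (x, t))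
      have := le_abs_self MB
      have := abs_nonneg MA
      have := abs_nonneg MX
      linarith)
    (fun x t => by
      have := hMX _ (hcm (x, t))
      have := le_abs_self MX
      have := abs_nonneg MA
      have := abs_nonneg MB
      linarith)
    (by
      intro x hx t ht
      have hp : (x, t) ∈ Ioo 0 ℓ ×ˢ Ioo 0 T := ⟨hx, ht⟩
      have h1 : HasFDerivAt A (fderiv ℝ A (x, t)) (x, t) :=
        ((hA.contDiffAt (hnhds _ hp)).differentiableAt (by simp)).hasFDerivAt
      have h2 : HasDerivAt (fun x' : ℝ => (x', t)) ((1:ℝ), (0:ℝ)) x :=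
        (hasDerivAt_id x).prodMk (hasDerivAt_const x t)
      have h3 := h1.comp_hasDerivAt x h2
      rw [hcK _ (hsub hp), fderivWithin_of_mem_nhds (hnhds _ hp)]
      refine h3.congr_of_eventuallyEq ?_
      filter_upwards [hcx x hx t ht] with x' hx'
      simp [hx'])
    (by
      intro x hx t ht
      have hp : (x, t) ∈ Ioo 0 ℓ ×ˢ Ioo 0 T := ⟨hx, ht⟩
      have h1 : HasFDerivAt B (fderiv ℝ B (x, t)) (x, t) :=
        ((hB.contDiffAt (hnhds _ hp)).differentiableAt (by simp)).hasFDerivAt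
      have h2 : HasDerivAt (fun t' : ℝ => (x, t')) ((0:ℝ), (1:ℝ)) t :=
        (hasDerivAt_const t x).prodMk (hasDerivAt_id t)
      have h3 := h1.comp_hasDerivAt t h2
      rw [hcK _ (hsub hp), fderivWithin_of_mem_nhds (hnhds _ hp), sub_eq_zero.1 (hcompat _ hp)]
      refine h3.congr_of_eventuallyEq ?_
      filter_upwards [hct x hx t ht] with t' ht'
      simp [ht'])
    y0
  set f₁ : ℝ → ℝ → (ℝ →L[ℝ] E) := fun x t =>
    ContinuousLinearMap.smulRight (1 : ℝ →L[ℝ] ℝ) (B (c (x, t)) (y x t)) with hf₁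
  set f₂ : ℝ → ℝ → (ℝ →L[ℝ] E) := fun x t =>
    ContinuousLinearMap.smulRight (1 : ℝ →L[ℝ] ℝ) (A (c (x, t)) (y x t)) with hf₂
  have hf₁c : Continuous fun p : ℝ × ℝ => f₁ p.1 p.2 :=
    (ContinuousLinearMap.smulRightL ℝ ℝ E (1 : ℝ →L[ℝ] ℝ)).continuous.comp
      ((hcont hB.continuousOn).clm_apply hyc)
  have hf₂c : Continuous fun p : ℝ × ℝ => f₂ p.1 p.2 :=
    (ContinuousLinearMap.smulRightL ℝ ℝ E (1 : ℝ →L[ℝ] ℝ)).continuous.comp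
      ((hcont hA.continuousOn).clm_apply hyc)
  set L : ℝ × ℝ → (ℝ × ℝ →L[ℝ] E) := fun p => (f₁ p.1 p.2).coprod (f₂ p.1 p.2) with hL
  have hLc : Continuous L := by
    have : L = fun p => (f₁ p.1 p.2).comp (ContinuousLinearMap.fst ℝ ℝ ℝ)
        + (f₂ p.1 p.2).comp (ContinuousLinearMap.snd ℝ ℝ ℝ) := by
      funext p; ext <;> simp [hL]
    rw [this]
    exact (hf₁c.clm_comp continuous_const).add (hf₂c.clm_comp continuous_const)
  have hder : ∀ p ∈ Ioo 0 ℓ ×ˢ Ioo 0 T, HasFDerivAt (fun p : ℝ × ℝ => y p.1 p.2) (L p) p := by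
    intro p hp
    have := hasStrictFDerivAt_uncurry_coprod (𝕜 := ℝ) (u := p) (f := y) (f₁ := f₁) (f₂ := f₂)
      (by
        filter_upwards [hopen.mem_nhds hp] with v hv
        exact (hy v.1 hv.1 v.2 hv.2).1.hasFDerivAt)
      (by
        filter_upwards [hopen.mem_nhds hp] with v hv
        exact (hy v.1 hv.1 v.2 hv.2).2.hasFDerivAt)
      hf₁c.continuousAt hf₂c.continuousAt
    exact this.hasFDerivAt
  refine ⟨fun p => y p.1 p.2, ?_, ?_, hy0⟩
  · have h1 : (1 : WithTop ℕ∞) = 0 + 1 := by simp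
    rw [h1, contDiffOn_succ_iff_hasFDerivWithinAt_of_uniqueDiffOn hu]
    refine ⟨by simp, L, contDiffOn_zero.2 hLc.continuousOn, fun p hp => ?_⟩
    rw [← hcl]
    apply hasFDerivWithinAt_closure_of_tendsto_fderiv
    · exact fun q hq => (hder q hq).differentiableAt.differentiableWithinAt
    · exact (convex_Ioo _ _).prod (convex_Ioo _ _)
    · exact hopen
    · exact fun q _ => hyc.continuousWithinAt
    · refine (hLc.continuousWithinAt (s := Ioo 0 ℓ ×ˢ Ioo 0 T) (x := p)).congr' ?_
      exact Filter.eventually_of_mem self_mem_nhdsWithin fun q hq => (hder q hq).fderiv.symm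
  · intro p hp
    rw [(hder p hp).fderiv]
    simp [hL, hf₁, hf₂, hcK p (hsub hp)]

end aux

/-- matrices as continuous linear maps, continuously and linearly in the matrix -/
noncomputable def matCLM (n : ℕ) :
    Matrix (Fin n) (Fin n) ℝ →L[ℝ] ((Fin n → ℝ) →L[ℝ] (Fin n → ℝ)) :=
  LinearMap.toContinuousLinearMap
    ((LinearMap.toContinuousLinearMap (𝕜 := ℝ) (E := Fin n → ℝ) (F' := Fin n → ℝ)).toLinearMap ∘ₗ
      (Matrix.toLin' (R := ℝ) (m := Fin n) (n := Fin n)).toLinearMap)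

lemma matCLM_apply (n : ℕ) (M : Matrix (Fin n) (Fin n) ℝ) (v : Fin n → ℝ) :
    matCLM n M v = M *ᵥ v := by
  simp [matCLM]

lemma matCLM_mul (n : ℕ) (M N : Matrix (Fin n) (Fin n) ℝ) :
    matCLM n (M * N) = matCLM n M * matCLM n N := by
  refine ContinuousLinearMap.ext fun v => ?_
  rw [mul_apply_eq_comp, matCLM_apply, matCLM_apply, matCLM_apply, Matrix.mulVec_mulVec]

/-- Existence and uniqueness for the seemingly overdetermined linear first-order system
under the compatibility condition `AB − BA + ∂ₓA − ∂ₜB = 0`. -/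
theorem stmt_10 (ℓ T : ℝ) (hℓ : 0 < ℓ) (hT : 0 < T) (n : ℕ) (hn : 1 ≤ n)
    (A B : ℝ × ℝ → Matrix (Fin n) (Fin n) ℝ)
    (hA : ContDiffOn ℝ 1 A (Set.Icc 0 ℓ ×ˢ Set.Icc 0 T))
    (hB : ContDiffOn ℝ 1 B (Set.Icc 0 ℓ ×ˢ Set.Icc 0 T))
    (hcompat : ∀ p ∈ Set.Ioo (0 : ℝ) ℓ ×ˢ Set.Ioo (0 : ℝ) T,
      A p * B p - B p * A p
        + fderiv ℝ A p ((1 : ℝ), (0 : ℝ)) - fderiv ℝ B p ((0 : ℝ), (1 : ℝ)) = 0)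
    (y_in : Fin n → ℝ) :
    ∃ y : ℝ × ℝ → (Fin n → ℝ), IsOverdetSol ℓ T A B y_in y ∧
      ∀ y' : ℝ × ℝ → (Fin n → ℝ), IsOverdetSol ℓ T A B y_in y' →
        Set.EqOn y y' (Set.Icc 0 ℓ ×ˢ Set.Icc 0 T) := by
  have hA2 : ContDiffOn ℝ 1 (fun p => matCLM n (A p)) (Set.Icc 0 ℓ ×ˢ Set.Icc 0 T) :=
    (matCLM n).contDiff.comp_contDiffOn hA
  have hB2 : ContDiffOn ℝ 1 (fun p => matCLM n (B p)) (Set.Icc 0 ℓ ×ˢ Set.Icc 0 T) :=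
    (matCLM n).contDiff.comp_contDiffOn hB
  have hnhds : ∀ p ∈ Set.Ioo 0 ℓ ×ˢ Set.Ioo 0 T, Set.Icc 0 ℓ ×ˢ Set.Icc 0 T ∈ nhds p :=
    fun p hp => Filter.mem_of_superset ((isOpen_Ioo.prod isOpen_Ioo).mem_nhds hp)
      (Set.prod_mono Set.Ioo_subset_Icc_self Set.Ioo_subset_Icc_self)
  have hfd : ∀ (C : ℝ × ℝ → Matrix (Fin n) (Fin n) ℝ),
      ContDiffOn ℝ 1 C (Set.Icc 0 ℓ ×ˢ Set.Icc 0 T) →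
      ∀ p ∈ Set.Ioo 0 ℓ ×ˢ Set.Ioo 0 T, ∀ v,
      fderiv ℝ (fun p => matCLM n (C p)) p v = matCLM n (fderiv ℝ C p v) := by
    intro C hC p hp v
    have h1 : HasFDerivAt C (fderiv ℝ C p) p :=
      ((hC.contDiffAt (hnhds p hp)).differentiableAt (by simp)).hasFDerivAt
    have h2 := ((matCLM n).hasFDerivAt (x := C p)).comp p h1
    have h3 : fderiv ℝ (fun p => matCLM n (C p)) p = (matCLM n).comp (fderiv ℝ C p) := h2.fderiv
    rw [h3]; rfl
  obtain ⟨y, hy1, hy2, hy3⟩ := exist_E ℓ T hℓ hT (fun p => matCLM n (A p))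
    (fun p => matCLM n (B p)) hA2 hB2 (by
      intro p hp
      rw [hfd A hA p hp, hfd B hB p hp, ← matCLM_mul, ← matCLM_mul, ← map_sub, ← map_add,
        ← map_sub, hcompat p hp, map_zero]) y_in
  refine ⟨y, ⟨hy1, fun p hp => ?_, hy3⟩, ?_⟩
  · have := hy2 p hp
    simpa only [matCLM_apply] using this
  · rintro z ⟨hz1, hz2, hz3⟩
    have hdy : ∀ p ∈ Set.Ioo 0 ℓ ×ˢ Set.Ioo 0 T, DifferentiableAt ℝ y p := fun p hp =>
      (hy1.contDiffAt (hnhds p hp)).differentiableAt (by simp)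
    have hdz : ∀ p ∈ Set.Ioo 0 ℓ ×ˢ Set.Ioo 0 T, DifferentiableAt ℝ z p := fun p hp =>
      (hz1.contDiffAt (hnhds p hp)).differentiableAt (by simp)
    have := unique_E ℓ T hℓ hT (fun p => matCLM n (A p)) (fun p => matCLM n (B p))
      hA2.continuousOn hB2.continuousOn (fun p => y p - z p)
      (hy1.continuousOn.sub hz1.continuousOn) (by simp [hy3, hz3])
      (fun p hp => (hdy p hp).sub (hdz p hp))
      (by
        intro p hp
        have e : fderiv ℝ (fun p => y p - z p) p = fderiv ℝ y p - fderiv ℝ z p :=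
          fderiv_fun_sub (hdy p hp) (hdz p hp)
        obtain ⟨e1, e2⟩ := hy2 p hp
        obtain ⟨e3, e4⟩ := hz2 p hp
        rw [e, _root_.sub_apply, _root_.sub_apply, e1, e2, e3, e4, map_sub, map_sub,
          matCLM_apply, matCLM_apply, matCLM_apply, matCLM_apply]
        exact ⟨rfl, rfl⟩)
    exact fun p hp => sub_eq_zero.1 (this p hp)
end

section
/- Let ℓ > 0 and T > 0, and let Υ_c : [0, ℓ] → ℝ³ be continuously differentiable. Let p : [0, ℓ] × [0, T] → ℝ³ and R : [0, ℓ] × [0, T] → ℝ^{3×3} be twice continuously differentiable with R(x,t)ᵀ R(x,t) = I₃ and det R(x,t) = 1 for all (x,t). Define v₁ = Rᵀ ∂ₜp, v₂ = vec(Rᵀ ∂ₜR), s₁ = Rᵀ ∂ₓp − e₁, and s₂ = vec(Rᵀ ∂ₓR) − Υ_c (all functions of (x,t) with values in ℝ³, Υ_c evaluated at x). Then, on (0, ℓ) × (0, T): ∂ₜ s₁ = ∂ₓ v₁ + Υ_c × v₁ + e₁ × v₂ − v₂ × s₁ − v₁ × s₂, and ∂ₜ s₂ = ∂ₓ v₂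 + Υ_c × v₂ − v₂ × s₂. -/
open Matrix

attribute [local instance] Matrix.normedAddCommGroup Matrix.normedSpace

/-- The cross product on `ℝ³`. -/
def cross (u v : Fin 3 → ℝ) : Fin 3 → ℝ :=
  ![u 1 * v 2 - u 2 * v 1, u 2 * v 0 - u 0 * v 2, u 0 * v 1 - u 1 * v 0]

/-- `vec A = (A₃₂, A₁₃, A₂₁)`, so that `vec û = u` for the cross-product matrix `û`. -/
def vecOf (A : Matrix (Fin 3) (Fin 3) ℝ) : Fin 3 → ℝ := ![A 2 1, A 0 2, A 1 0]

/-- `e₁ = (1, 0, 0)`. -/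
def e1v : Fin 3 → ℝ := ![1, 0, 0]

/-- Linear velocity `v₁ = Rᵀ ∂ₜ p` in the body-attached frame. -/
noncomputable def v1f (p : ℝ × ℝ → (Fin 3 → ℝ)) (R : ℝ × ℝ → Matrix (Fin 3) (Fin 3) ℝ) :
    ℝ × ℝ → (Fin 3 → ℝ) :=
  fun pt => (R pt)ᵀ *ᵥ fderiv ℝ p pt ((0 : ℝ), (1 : ℝ))

/-- Angular velocity `v₂ = vec(Rᵀ ∂ₜ R)` in the body-attached frame. -/
noncomputable def v2f (R : ℝ × ℝ → Matrix (Fin 3) (Fin 3) ℝ) : ℝ × ℝ → (Fin 3 → ℝ) :=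
  fun pt => vecOf ((R pt)ᵀ * fderiv ℝ R pt ((0 : ℝ), (1 : ℝ)))

/-- Linear strain `s₁ = Rᵀ ∂ₓ p − e₁`. -/
noncomputable def s1f (p : ℝ × ℝ → (Fin 3 → ℝ)) (R : ℝ × ℝ → Matrix (Fin 3) (Fin 3) ℝ) :
    ℝ × ℝ → (Fin 3 → ℝ) :=
  fun pt => (R pt)ᵀ *ᵥ fderiv ℝ p pt ((1 : ℝ), (0 : ℝ)) - e1v

/-- Angular strain `s₂ = vec(Rᵀ ∂ₓ R) − Υ_c`. -/
noncomputable def s2f (R : ℝ × ℝ → Matrix (Fin 3) (Fin 3) ℝ) (Υc : ℝ → (Fin 3 → ℝ)) :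
    ℝ × ℝ → (Fin 3 → ℝ) :=
  fun pt => vecOf ((R pt)ᵀ * fderiv ℝ R pt ((1 : ℝ), (0 : ℝ))) - Υc pt.1

theorem aux_entry {R : ℝ × ℝ → Matrix (Fin 3) (Fin 3) ℝ} {R' : ℝ × ℝ →L[ℝ] Matrix (Fin 3) (Fin 3) ℝ}
    {pt : ℝ × ℝ} (h : HasFDerivAt R R' pt) (w : ℝ × ℝ) (i j : Fin 3) :
    HasDerivAt (fun t : ℝ => R (pt + t • w) i j) (R' w i j) 0 := by
  have hl : HasDerivAt (fun t : ℝ => pt + t • w) w 0 := by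
    simpa using ((hasDerivAt_id (0 : ℝ)).smul_const w).const_add pt
  have h0 : HasFDerivAt R R' (pt + (0 : ℝ) • w) := by simpa using h
  have h1 := h0.comp_hasDerivAt (0 : ℝ) hl
  exact (hasDerivAt_pi.1 ((hasDerivAt_pi.1 h1) i)) j

theorem aux_entry_vec {b : ℝ × ℝ → (Fin 3 → ℝ)} {b' : ℝ × ℝ →L[ℝ] (Fin 3 → ℝ)}
    {pt : ℝ × ℝ} (h : HasFDerivAt b b' pt) (w : ℝ × ℝ) (i : Fin 3) :
    HasDerivAt (fun t : ℝ => b (pt + t • w) i) (b' w i) 0 := by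
  have hl : HasDerivAt (fun t : ℝ => pt + t • w) w 0 := by
    simpa using ((hasDerivAt_id (0 : ℝ)).smul_const w).const_add pt
  have h0 : HasFDerivAt b b' (pt + (0 : ℝ) • w) := by simpa using h
  have h1 := h0.comp_hasDerivAt (0 : ℝ) hl
  exact (hasDerivAt_pi.1 h1) i

theorem aux_diff_entry {R : ℝ × ℝ → Matrix (Fin 3) (Fin 3) ℝ} {pt : ℝ × ℝ}
    (h : DifferentiableAt ℝ R pt) (i j : Fin 3) :
    DifferentiableAt ℝ (fun q => R q i j) pt :=
  differentiableAt_pi.1 (differentiableAt_pi.1 h i) j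

theorem aux_mulVec {A : ℝ × ℝ → Matrix (Fin 3) (Fin 3) ℝ} {b : ℝ × ℝ → (Fin 3 → ℝ)}
    {pt : ℝ × ℝ} (hA : DifferentiableAt ℝ A pt) (hb : DifferentiableAt ℝ b pt) (w : ℝ × ℝ)
    (c : Fin 3 → ℝ) :
    fderiv ℝ (fun q => (A q)ᵀ *ᵥ b q - c) pt w
      = (fderiv ℝ A pt w)ᵀ *ᵥ b pt + (A pt)ᵀ *ᵥ fderiv ℝ b pt w := by
  have hd : DifferentiableAt ℝ (fun q => (A q)ᵀ *ᵥ b q - c) pt := by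
    refine differentiableAt_pi.2 fun i => ?_
    have h1 := fun j => aux_diff_entry hA j i
    have h2 := fun j => differentiableAt_pi.1 hb j
    simp only [Pi.sub_apply, mulVec, dotProduct, Fin.sum_univ_three, transpose_apply]
    exact (((((h1 0).mul (h2 0)).add ((h1 1).mul (h2 1))).add ((h1 2).mul (h2 2)))).sub_const _
  ext i
  have e1 := fun j => aux_entry hA.hasFDerivAt w j i
  have e2 := fun j => aux_entry_vec hb.hasFDerivAt w j
  have e3 := aux_entry_vec hd.hasFDerivAt w i
  have e4 := (((((e1 0).mul (e2 0)).add ((e1 1).mul (e2 1))).add ((e1 2).mul (e2 2)))).sub_const (c i)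
  have e5 := e3.unique (e4.congr_of_eventuallyEq (Filter.Eventually.of_forall fun t => by
    simp [mulVec, dotProduct, Fin.sum_univ_three]))
  rw [e5]
  simp [mulVec, dotProduct, Fin.sum_univ_three]
  ring

theorem aux_mul {A B : ℝ × ℝ → Matrix (Fin 3) (Fin 3) ℝ}
    {pt : ℝ × ℝ} (hA : DifferentiableAt ℝ A pt) (hB : DifferentiableAt ℝ B pt) :
    DifferentiableAt ℝ (fun q => (A q)ᵀ * B q) pt ∧ ∀ w,
    fderiv ℝ (fun q => (A q)ᵀ * B q) pt w
      = (fderiv ℝ A pt w)ᵀ * B pt + (A pt)ᵀ * fderiv ℝ B pt w := by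
  have hd : DifferentiableAt ℝ (fun q => (A q)ᵀ * B q) pt := by
    refine differentiableAt_pi.2 fun i => differentiableAt_pi.2 fun k => ?_
    have h1 := fun j => aux_diff_entry hA j i
    have h2 := fun j => aux_diff_entry hB j k
    simp only [mul_apply, Fin.sum_univ_three, transpose_apply]
    exact (((((h1 0).mul (h2 0)).add ((h1 1).mul (h2 1))).add ((h1 2).mul (h2 2))))
  refine ⟨hd, fun w => ?_⟩
  ext i k
  have e1 := fun j => aux_entry hA.hasFDerivAt w j i
  have e2 := fun j => aux_entry hB.hasFDerivAt w j k
  have e3 := aux_entry hd.hasFDerivAt w i k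
  have e4 := (((((e1 0).mul (e2 0)).add ((e1 1).mul (e2 1))).add ((e1 2).mul (e2 2))))
  have e5 := e3.unique (e4.congr_of_eventuallyEq (Filter.Eventually.of_forall fun t => by
    simp [mul_apply, Fin.sum_univ_three]))
  rw [e5]
  simp [mul_apply, Fin.sum_univ_three]
  ring

theorem aux_vecOf {M : ℝ × ℝ → Matrix (Fin 3) (Fin 3) ℝ} {c : ℝ × ℝ → (Fin 3 → ℝ)}
    {pt : ℝ × ℝ} (hM : DifferentiableAt ℝ M pt) (hc : DifferentiableAt ℝ c pt) (w : ℝ × ℝ) :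
    fderiv ℝ (fun q => vecOf (M q) - c q) pt w = vecOf (fderiv ℝ M pt w) - fderiv ℝ c pt w := by
  have hd0 : DifferentiableAt ℝ (fun q => vecOf (M q)) pt := by
    refine differentiableAt_pi.2 fun i => ?_
    fin_cases i
    · exact aux_diff_entry hM 2 1
    · exact aux_diff_entry hM 0 2
    · exact aux_diff_entry hM 1 0
  have hd : fderiv ℝ (fun q => vecOf (M q) - c q) pt = _ := fderiv_fun_sub hd0 hc
  rw [hd]
  ext i
  have e3 := aux_entry_vec hd0.hasFDerivAt w i
  have key : fderiv ℝ (fun q => vecOf (M q)) pt w i = vecOf (fderiv ℝ M pt w) i := by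
    refine e3.unique ?_
    fin_cases i
    · exact aux_entry hM.hasFDerivAt w 2 1
    · exact aux_entry hM.hasFDerivAt w 0 2
    · exact aux_entry hM.hasFDerivAt w 1 0
  simp [key]

/-- Second-order data at an interior point. -/
theorem aux_second {E : Type*} [NormedAddCommGroup E] [NormedSpace ℝ E] {f : ℝ × ℝ → E}
    {pt : ℝ × ℝ} (h : ContDiffAt ℝ 2 f pt) :
    (∀ w, DifferentiableAt ℝ (fun q => fderiv ℝ f q w) pt) ∧
    ∀ v w, fderiv ℝ (fun q => fderiv ℝ f q w) pt v = fderiv ℝ (fun q => fderiv ℝ f q v) pt w := by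
  have h1 : DifferentiableAt ℝ (fderiv ℝ f) pt :=
    (h.fderiv_right (m := 1) (by norm_num)).differentiableAt (by norm_num)
  have h2 : ∀ v w, fderiv ℝ (fun q => fderiv ℝ f q w) pt v = fderiv ℝ (fderiv ℝ f) pt v w := by
    intro v w
    have := (h1.hasFDerivAt.clm_apply (hasFDerivAt_const w pt)).fderiv
    rw [this]; simp
  refine ⟨fun w => h1.clm_apply (differentiableAt_const w), fun v w => ?_⟩
  rw [h2, h2]
  exact (h.isSymmSndFDerivAt (by simp)).eq v w

theorem aux_alg2 (W K : Matrix (Fin 3) (Fin 3) ℝ) (hW : Wᵀ = -W) (hK : Kᵀ = -K) :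
    vecOf (Wᵀ * K - Kᵀ * W) = cross (vecOf K) (vecOf W) := by
  have w := fun i j => congrFun (congrFun hW i) j
  have k := fun i j => congrFun (congrFun hK i) j
  simp only [transpose_apply, Matrix.neg_apply] at w k
  have w0 : W 0 0 = 0 := by linarith [w 0 0]
  have w1 : W 1 1 = 0 := by linarith [w 1 1]
  have w2 : W 2 2 = 0 := by linarith [w 2 2]
  have k0 : K 0 0 = 0 := by linarith [k 0 0]
  have k1 : K 1 1 = 0 := by linarith [k 1 1]
  have k2 : K 2 2 = 0 := by linarith [k 2 2]
  rw [hW, hK]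
  ext i
  fin_cases i <;>
  simp [vecOf, cross, mul_apply, Fin.sum_univ_three, w0, w1, w2, k0, k1, k2, w 1 0, w 0 2, w 2 1, k 1 0, k 0 2, k 2 1] <;> ring

theorem aux_alg1 (W : Matrix (Fin 3) (Fin 3) ℝ) (hW : Wᵀ = -W) (u : Fin 3 → ℝ) :
    Wᵀ *ᵥ u = - cross (vecOf W) u := by
  have w := fun i j => congrFun (congrFun hW i) j
  simp only [transpose_apply, Matrix.neg_apply] at w
  have w0 : W 0 0 = 0 := by linarith [w 0 0]
  have w1 : W 1 1 = 0 := by linarith [w 1 1]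
  have w2 : W 2 2 = 0 := by linarith [w 2 2]
  ext i
  fin_cases i <;>
  simp [vecOf, cross, mulVec, dotProduct, Fin.sum_univ_three, w0, w1, w2, w 1 0, w 0 2, w 2 1] <;> ring

/-- The compatibility equations (the last six equations of the IGEB model) hold
automatically for every admissible `(p, R)`. -/
theorem stmt_15 (ℓ T : ℝ) (hℓ : 0 < ℓ) (hT : 0 < T)
    (Υc : ℝ → (Fin 3 → ℝ)) (hΥc : ContDiffOn ℝ 1 Υc (Set.Icc 0 ℓ))
    (p : ℝ × ℝ → (Fin 3 → ℝ)) (R : ℝ × ℝ → Matrix (Fin 3) (Fin 3) ℝ)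
    (hp : ContDiffOn ℝ 2 p (Set.Icc 0 ℓ ×ˢ Set.Icc 0 T))
    (hR : ContDiffOn ℝ 2 R (Set.Icc 0 ℓ ×ˢ Set.Icc 0 T))
    (hSO : ∀ pt ∈ Set.Icc (0 : ℝ) ℓ ×ˢ Set.Icc (0 : ℝ) T,
      (R pt)ᵀ * R pt = 1 ∧ (R pt).det = 1) :
    ∀ pt ∈ Set.Ioo (0 : ℝ) ℓ ×ˢ Set.Ioo (0 : ℝ) T,
      (fderiv ℝ (s1f p R) pt ((0 : ℝ), (1 : ℝ))
          = fderiv ℝ (v1f p R) pt ((1 : ℝ), (0 : ℝ))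
            + cross (Υc pt.1) (v1f p R pt) + cross e1v (v2f R pt)
            - cross (v2f R pt) (s1f p R pt) - cross (v1f p R pt) (s2f R Υc pt)) ∧
      (fderiv ℝ (s2f R Υc) pt ((0 : ℝ), (1 : ℝ))
          = fderiv ℝ (v2f R) pt ((1 : ℝ), (0 : ℝ))
            + cross (Υc pt.1) (v2f R pt) - cross (v2f R pt) (s2f R Υc pt)) := by
  intro pt hpt
  have hnhds : Set.Icc (0 : ℝ) ℓ ×ˢ Set.Icc (0 : ℝ) T ∈ nhds pt :=
    prod_mem_nhds (Icc_mem_nhds hpt.1.1 hpt.1.2) (Icc_mem_nhds hpt.2.1 hpt.2.2)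
  have cp := hp.contDiffAt hnhds
  have cR := hR.contDiffAt hnhds
  have dR : DifferentiableAt ℝ R pt := cR.differentiableAt (by norm_num)
  obtain ⟨p1, p2⟩ := aux_second cp
  obtain ⟨R1, R2⟩ := aux_second cR
  have dΥ : DifferentiableAt ℝ Υc pt.1 :=
    (hΥc.contDiffAt (Icc_mem_nhds hpt.1.1 hpt.1.2)).differentiableAt (by norm_num)
  have hΥ : HasFDerivAt (fun q : ℝ × ℝ => Υc q.1)
      ((fderiv ℝ Υc pt.1).comp (ContinuousLinearMap.fst ℝ ℝ ℝ)) pt :=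
    dΥ.hasFDerivAt.comp pt hasFDerivAt_fst
  have horth := (hSO pt (mem_of_mem_nhds hnhds)).1
  have horth' : R pt * (R pt)ᵀ = 1 := mul_eq_one_comm.1 horth
  have hskew : ∀ w, ((R pt)ᵀ * fderiv ℝ R pt w)ᵀ = -((R pt)ᵀ * fderiv ℝ R pt w) := by
    intro w
    have h1 := (aux_mul dR dR).2 w
    have h2 : fderiv ℝ (fun q => (R q)ᵀ * R q) pt = 0 := by
      have : (fun q => (R q)ᵀ * R q) =ᶠ[nhds pt] fun _ => (1 : Matrix (Fin 3) (Fin 3) ℝ) := by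
        filter_upwards [hnhds] with q hq using (hSO q hq).1
      rw [this.fderiv_eq]; simp
    rw [h2] at h1
    rw [transpose_mul, transpose_transpose]
    exact eq_neg_of_add_eq_zero_left h1.symm
  have hins : ∀ w, (fderiv ℝ R pt w)ᵀ = ((R pt)ᵀ * fderiv ℝ R pt w)ᵀ * (R pt)ᵀ := by
    intro w
    rw [transpose_mul, transpose_transpose, mul_assoc, horth', mul_one]
  have hinsV : ∀ w u, (fderiv ℝ R pt w)ᵀ *ᵥ u
      = - cross (vecOf ((R pt)ᵀ * fderiv ℝ R pt w)) ((R pt)ᵀ *ᵥ u) := by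
    intro w u
    rw [← aux_alg1 _ (hskew w), mulVec_mulVec, ← hins]
  constructor
  · have a1 : fderiv ℝ (s1f p R) pt ((0 : ℝ), (1 : ℝ)) = _ :=
      aux_mulVec dR (p1 (1, 0)) (0, 1) e1v
    have a2 : fderiv ℝ (v1f p R) pt ((1 : ℝ), (0 : ℝ)) =
        (fderiv ℝ R pt (1, 0))ᵀ *ᵥ fderiv ℝ p pt (0, 1)
          + (R pt)ᵀ *ᵥ fderiv ℝ (fun q => fderiv ℝ p q (0, 1)) pt (1, 0) := by
      have := aux_mulVec dR (p1 (0, 1)) (1, 0) 0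
      simp only [sub_zero] at this
      exact this
    rw [a1, a2, p2 (0, 1) (1, 0), hinsV, hinsV]
    simp only [s1f, s2f, v1f, v2f]
    generalize (R pt)ᵀ *ᵥ fderiv ℝ (fun q => fderiv ℝ p q (0, 1)) pt (1, 0) = Z
    generalize (R pt)ᵀ *ᵥ fderiv ℝ p pt (0, 1) = a
    generalize (R pt)ᵀ *ᵥ fderiv ℝ p pt (1, 0) = b
    generalize vecOf ((R pt)ᵀ * fderiv ℝ R pt (0, 1)) = c
    generalize vecOf ((R pt)ᵀ * fderiv ℝ R pt (1, 0)) = d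
    ext i
    fin_cases i <;> simp [cross, e1v, vecHead, vecTail] <;> ring
  · have m1 := aux_mul dR (R1 (1, 0))
    have m2 := aux_mul dR (R1 (0, 1))
    have hsym : fderiv ℝ (fun q => fderiv ℝ R q (1, 0)) pt (0, 1)
        = fderiv ℝ (fun q => fderiv ℝ R q (0, 1)) pt (1, 0) := R2 (0, 1) (1, 0)
    have hz : fderiv ℝ (fun q : ℝ × ℝ => Υc q.1) pt (0, 1) = 0 := by
      rw [hΥ.fderiv]; simp
    have a1 : fderiv ℝ (s2f R Υc) pt ((0 : ℝ), (1 : ℝ)) =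
        vecOf ((fderiv ℝ R pt (0, 1))ᵀ * fderiv ℝ R pt (1, 0)
          + (R pt)ᵀ * fderiv ℝ (fun q => fderiv ℝ R q (1, 0)) pt (0, 1)) := by
      have := aux_vecOf m1.1 hΥ.differentiableAt (0, 1)
      rw [hz, sub_zero] at this
      exact this.trans (congrArg vecOf (m1.2 (0, 1)))
    have a2 : fderiv ℝ (v2f R) pt ((1 : ℝ), (0 : ℝ)) =
        vecOf ((fderiv ℝ R pt (1, 0))ᵀ * fderiv ℝ R pt (0, 1)
          + (R pt)ᵀ * fderiv ℝ (fun q => fderiv ℝ R q (0, 1)) pt (1, 0)) := by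
      have := aux_vecOf m2.1 (differentiableAt_const (0 : Fin 3 → ℝ)) (1, 0)
      simp only [sub_zero, fderiv_fun_const, Pi.zero_apply, _root_.zero_apply] at this
      exact this.trans (congrArg vecOf (m2.2 (1, 0)))
    have k := aux_alg2 _ _ (hskew (0, 1)) (hskew (1, 0))
    have hm : ∀ v w, ((R pt)ᵀ * fderiv ℝ R pt v)ᵀ * ((R pt)ᵀ * fderiv ℝ R pt w)
        = (fderiv ℝ R pt v)ᵀ * fderiv ℝ R pt w := by
      intro v w
      rw [← mul_assoc, ← hins]
    rw [hm, hm] at k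
    rw [a1, a2, hsym]
    simp only [s2f, v2f]
    generalize vecOf ((R pt)ᵀ * fderiv ℝ R pt (0, 1)) = c at *
    generalize vecOf ((R pt)ᵀ * fderiv ℝ R pt (1, 0)) = d at *
    generalize (R pt)ᵀ * fderiv ℝ (fun q => fderiv ℝ R q (0, 1)) pt (1, 0) = Z
    generalize (fderiv ℝ R pt (0, 1))ᵀ * fderiv ℝ R pt (1, 0) = X at *
    generalize (fderiv ℝ R pt (1, 0))ᵀ * fderiv ℝ R pt (0, 1) = Y at *
    ext i
    have ki := congrFun k i
    fin_cases i <;> simp [cross, vecOf, vecHead, vecTail] at ki ⊢ <;> linarith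
end

section
/- Let ℓ > 0 and T > 0, let M, C : [0, ℓ] → ℝ^{6×6} be continuously differentiable with M(x) and C(x) symmetric positive definite for every x, let Υ_c : [0, ℓ] → ℝ³ be continuously differentiable, and let Φ̄, Ψ̄ : [0, ℓ] × [0, T] → ℝ³ be continuous. Let p : [0, ℓ] × [0, T] → ℝ³ and R : [0, ℓ] × [0, T] → ℝ^{3×3} be twice continuously differentiable with R(x,t)ᵀ R(x,t) = I₃ and det R(x,t) = 1 for all (x,t). Define v₁ = Rᵀ ∂ₜp, v₂ = vec(Rᵀ ∂ₜR), v = (v₁, v₂) ∈ ℝ⁶, s₁ = Rᵀ ∂ₓp − e₁, s₂ = vec(Rᵀ ∂ₓR) − Υ_c, s = (s₁, s₂) ∈ ℝ⁶, z = C^{-1} s with components z = (z₁, z₂) ∈ ℝ³ × ℝ³, and h = M v with components h = (h₁, h₂) ∈ ℝ³ × ℝ³. Then the following two statements are equivalent on (0, ℓ) × (0, T): (IGEB, first six equations) (M ∂ₜv)₁ − ∂ₓ z₁ − Υ_c × z₁ + v₂ × h₁ + z₁ × s₂ = Φ̄ and (M ∂ₜv)₂ − ∂ₓ z₂ − e₁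 × z₁ − Υ_c × z₂ + v₁ × h₁ + v₂ × h₂ + z₁ × s₁ + z₂ × s₂ = Ψ̄, where (M ∂ₜv)₁ and (M ∂ₜv)₂ are the first three and last three components of M ∂ₜv; (GEB) ∂ₜ(R h₁) = ∂ₓ(R z₁) + R Φ̄ and (∂ₜp) × (R h₁) + ∂ₜ(R h₂) = (∂ₓp) × (R z₁) + ∂ₓ(R z₂) + R Ψ̄. -/
open Matrix

attribute [local instance] Matrix.normedAddCommGroup Matrix.normedSpace

/-- Index type for `ℝ⁶` split into two blocks of `ℝ³`. -/
abbrev I6 := Fin 3 ⊕ Fin 3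

/-- Velocity vector `v = (v₁, v₂) ∈ ℝ⁶`. -/
noncomputable def vf (p : ℝ × ℝ → (Fin 3 → ℝ)) (R : ℝ × ℝ → Matrix (Fin 3) (Fin 3) ℝ) :
    ℝ × ℝ → (I6 → ℝ) :=
  fun pt => Sum.elim (v1f p R pt) (v2f R pt)

/-- Internal forces and moments `z = C⁻¹ s ∈ ℝ⁶`. -/
noncomputable def zf (C : ℝ → Matrix I6 I6 ℝ) (Υc : ℝ → (Fin 3 → ℝ))
    (p : ℝ × ℝ → (Fin 3 → ℝ)) (R : ℝ × ℝ → Matrix (Fin 3) (Fin 3) ℝ) :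
    ℝ × ℝ → (I6 → ℝ) :=
  fun pt => (C pt.1)⁻¹ *ᵥ Sum.elim (s1f p R pt) (s2f R Υc pt)

/-- First three components `z₁` of `z`. -/
noncomputable def z1f (C : ℝ → Matrix I6 I6 ℝ) (Υc : ℝ → (Fin 3 → ℝ))
    (p : ℝ × ℝ → (Fin 3 → ℝ)) (R : ℝ × ℝ → Matrix (Fin 3) (Fin 3) ℝ) :
    ℝ × ℝ → (Fin 3 → ℝ) :=
  fun pt i => zf C Υc p R pt (Sum.inl i)

/-- Last three components `z₂` of `z`. -/
noncomputable def z2f (C : ℝ → Matrix I6 I6 ℝ) (Υc : ℝ → (Fin 3 → ℝ))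
    (p : ℝ × ℝ → (Fin 3 → ℝ)) (R : ℝ × ℝ → Matrix (Fin 3) (Fin 3) ℝ) :
    ℝ × ℝ → (Fin 3 → ℝ) :=
  fun pt i => zf C Υc p R pt (Sum.inr i)

/-- Momenta `h = M v ∈ ℝ⁶`. -/
noncomputable def hf (M : ℝ → Matrix I6 I6 ℝ)
    (p : ℝ × ℝ → (Fin 3 → ℝ)) (R : ℝ × ℝ → Matrix (Fin 3) (Fin 3) ℝ) :
    ℝ × ℝ → (I6 → ℝ) :=
  fun pt => M pt.1 *ᵥ vf p R pt

/-- First three components `h₁` of `h`. -/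
noncomputable def h1f (M : ℝ → Matrix I6 I6 ℝ)
    (p : ℝ × ℝ → (Fin 3 → ℝ)) (R : ℝ × ℝ → Matrix (Fin 3) (Fin 3) ℝ) :
    ℝ × ℝ → (Fin 3 → ℝ) :=
  fun pt i => hf M p R pt (Sum.inl i)

/-- Last three components `h₂` of `h`. -/
noncomputable def h2f (M : ℝ → Matrix I6 I6 ℝ)
    (p : ℝ × ℝ → (Fin 3 → ℝ)) (R : ℝ × ℝ → Matrix (Fin 3) (Fin 3) ℝ) :
    ℝ × ℝ → (Fin 3 → ℝ) :=
  fun pt i => hf M p R pt (Sum.inr i)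

/-- `M ∂ₜ v ∈ ℝ⁶`. -/
noncomputable def Mdtv (M : ℝ → Matrix I6 I6 ℝ)
    (p : ℝ × ℝ → (Fin 3 → ℝ)) (R : ℝ × ℝ → Matrix (Fin 3) (Fin 3) ℝ) :
    ℝ × ℝ → (I6 → ℝ) :=
  fun pt => M pt.1 *ᵥ fderiv ℝ (vf p R) pt ((0 : ℝ), (1 : ℝ))


lemma fderiv_sum_mul {n : Type*} [Fintype n] {f g : n → ℝ × ℝ → ℝ} {pt : ℝ × ℝ}
    (hf : ∀ k, DifferentiableAt ℝ (f k) pt) (hg : ∀ k, DifferentiableAt ℝ (g k) pt) (d : ℝ × ℝ) :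
    fderiv ℝ (fun q => ∑ k, f k q * g k q) pt d
      = ∑ k, (fderiv ℝ (f k) pt d * g k pt + f k pt * fderiv ℝ (g k) pt d) := by
  rw [fderiv_fun_sum fun k _ => (hf k).fun_mul (hg k), ContinuousLinearMap.sum_apply]
  refine Finset.sum_congr rfl fun k _ => ?_
  rw [fderiv_fun_mul (hf k) (hg k)]
  simp only [ContinuousLinearMap.add_apply, ContinuousLinearMap.smul_apply, smul_eq_mul]
  ring

lemma hasFDerivAt_entry {m n : Type*} [Fintype m] [Fintype n] {A : ℝ × ℝ → Matrix m n ℝ} {pt : ℝ × ℝ}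
    (hA : DifferentiableAt ℝ A pt) (i : m) (j : n) :
    DifferentiableAt ℝ (fun q => A q i j) pt ∧
      ∀ d, fderiv ℝ (fun q => A q i j) pt d = fderiv ℝ A pt d i j := by
  have h1 := hasFDerivAt_pi'.1 hA.hasFDerivAt i
  have h2 := hasFDerivAt_pi'.1 h1 j
  exact ⟨h2.differentiableAt, fun d => by rw [h2.fderiv]; rfl⟩

lemma hasFDerivAt_coord {m : Type*} [Fintype m] {w : ℝ × ℝ → m → ℝ} {pt : ℝ × ℝ}
    (hA : DifferentiableAt ℝ w pt) (i : m) :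
    DifferentiableAt ℝ (fun q => w q i) pt ∧
      ∀ d, fderiv ℝ (fun q => w q i) pt d = fderiv ℝ w pt d i := by
  have h1 := hasFDerivAt_pi'.1 hA.hasFDerivAt i
  exact ⟨h1.differentiableAt, fun d => by rw [h1.fderiv]; rfl⟩

lemma diff_of_entry {m n : Type*} [Fintype m] [Fintype n] {A : ℝ × ℝ → Matrix m n ℝ} {pt : ℝ × ℝ}
    (h : ∀ i j, DifferentiableAt ℝ (fun q => A q i j) pt) : DifferentiableAt ℝ A pt :=
  differentiableAt_pi.2 fun i => differentiableAt_pi.2 fun j => h i j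

lemma diff_mulVec {m n : Type*} [Fintype m] [Fintype n] {A : ℝ × ℝ → Matrix m n ℝ}
    {w : ℝ × ℝ → n → ℝ} {pt : ℝ × ℝ}
    (hA : DifferentiableAt ℝ A pt) (hw : DifferentiableAt ℝ w pt) :
    DifferentiableAt ℝ (fun q => A q *ᵥ w q) pt :=
  differentiableAt_pi.2 fun i => by
    simp only [Matrix.mulVec, dotProduct]
    exact DifferentiableAt.fun_sum fun j _ =>
      (hasFDerivAt_entry hA i j).1.mul (hasFDerivAt_coord hw j).1

lemma fderiv_mulVec {m n : Type*} [Fintype m] [Fintype n] {A : ℝ × ℝ → Matrix m n ℝ}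
    {w : ℝ × ℝ → n → ℝ} {pt : ℝ × ℝ}
    (hA : DifferentiableAt ℝ A pt) (hw : DifferentiableAt ℝ w pt) (d : ℝ × ℝ) :
    fderiv ℝ (fun q => A q *ᵥ w q) pt d
      = fderiv ℝ A pt d *ᵥ w pt + A pt *ᵥ fderiv ℝ w pt d := by
  ext i
  rw [← (hasFDerivAt_coord (diff_mulVec hA hw) i).2 d]
  have key := fderiv_sum_mul (fun k => (hasFDerivAt_entry hA i k).1)
    (fun k => (hasFDerivAt_coord hw k).1) d
  refine key.trans ?_
  simp only [Matrix.mulVec, dotProduct, Pi.add_apply, ← Finset.sum_add_distrib]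
  refine Finset.sum_congr rfl fun j _ => ?_
  exact congrArg₂ (· + ·) (congrArg (· * w pt j) ((hasFDerivAt_entry hA i j).2 d))
    (congrArg (A pt i j * ·) ((hasFDerivAt_coord hw j).2 d))

lemma diff_det {n : Type*} [Fintype n] [DecidableEq n] {A : ℝ × ℝ → Matrix n n ℝ} {pt : ℝ × ℝ}
    (h : ∀ i j, DifferentiableAt ℝ (fun q => A q i j) pt) :
    DifferentiableAt ℝ (fun q => (A q).det) pt := by
  simp only [Matrix.det_apply']
  exact DifferentiableAt.fun_sum fun σ _ =>
    (DifferentiableAt.const_mul (HasFDerivAt.finset_prod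
      (g := fun i q => A q (σ i) i) fun i _ => (h (σ i) i).hasFDerivAt).differentiableAt _)

lemma diff_inv {n : Type*} [Fintype n] [DecidableEq n] {A : ℝ × ℝ → Matrix n n ℝ} {pt : ℝ × ℝ}
    (hA : DifferentiableAt ℝ A pt) (h0 : (A pt).det ≠ 0) :
    DifferentiableAt ℝ (fun q => (A q)⁻¹) pt := by
  refine diff_of_entry fun i j => ?_
  simp only [Matrix.inv_def, Matrix.smul_apply, Ring.inverse_eq_inv', smul_eq_mul,
    Matrix.adjugate_apply]
  refine ((diff_det fun i j => (hasFDerivAt_entry hA i j).1).inv h0).mul (diff_det fun a b => ?_)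
  simp only [Matrix.updateRow_apply]
  split_ifs
  · exact differentiableAt_const _
  · exact (hasFDerivAt_entry hA a b).1

lemma cross_rot (Q : Matrix (Fin 3) (Fin 3) ℝ) (h1 : Qᵀ * Q = 1) (h2 : Q.det = 1)
    (a b : Fin 3 → ℝ) : cross (Q *ᵥ a) (Q *ᵥ b) = Q *ᵥ cross a b := by
  have h3 : Q * Qᵀ = 1 := mul_eq_one_comm.1 h1
  have h4 : Qᵀ *ᵥ cross (Q *ᵥ a) (Q *ᵥ b) = Q.det • cross a b := by
    ext i
    rw [Matrix.det_fin_three]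
    fin_cases i <;>
      simp [cross, Matrix.mulVec, dotProduct, Fin.sum_univ_three] <;> ring
  rw [h2, one_smul] at h4
  rw [← h4, Matrix.mulVec_mulVec, h3, Matrix.one_mulVec]

lemma skew_mulVec (W : Matrix (Fin 3) (Fin 3) ℝ) (h : Wᵀ + W = 0) (x : Fin 3 → ℝ) :
    W *ᵥ x = cross (vecOf W) x := by
  have e : ∀ i j, W j i + W i j = 0 := fun i j => congrFun (congrFun h i) j
  have e00 := e 0 0
  have e11 := e 1 1
  have e22 := e 2 2
  have e01 : W 0 1 = - W 1 0 := by linarith [e 0 1]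
  have e12 : W 1 2 = - W 2 1 := by linarith [e 1 2]
  have e20 : W 2 0 = - W 0 2 := by linarith [e 2 0]
  have z0 : W 0 0 = 0 := by linarith
  have z1 : W 1 1 = 0 := by linarith
  have z2 : W 2 2 = 0 := by linarith
  ext i
  fin_cases i <;>
    simp [cross, vecOf, Matrix.mulVec, dotProduct, Fin.sum_univ_three, e01, e12, e20, z0, z1, z2]
      <;> ring

lemma skew_deriv {R : ℝ × ℝ → Matrix (Fin 3) (Fin 3) ℝ} {pt : ℝ × ℝ}
    (hR : DifferentiableAt ℝ R pt) (h : ∀ᶠ q in nhds pt, (R q)ᵀ * R q = 1) (d : ℝ × ℝ) :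
    ((R pt)ᵀ * fderiv ℝ R pt d)ᵀ + (R pt)ᵀ * fderiv ℝ R pt d = 0 := by
  ext i j
  have h1 : (fun q => ∑ k, R q k i * R q k j) =ᶠ[nhds pt]
      fun _ => (1 : Matrix (Fin 3) (Fin 3) ℝ) i j := by
    filter_upwards [h] with q hq
    rw [← hq]; rfl
  have h2 : fderiv ℝ (fun q => ∑ k, R q k i * R q k j) pt d = 0 := by
    rw [h1.fderiv_eq]; simp
  have key := fderiv_sum_mul (fun k => (hasFDerivAt_entry hR k i).1)
    (fun k => (hasFDerivAt_entry hR k j).1) d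
  have h3 := key.symm.trans h2
  simp only [Matrix.add_apply, Matrix.transpose_apply, Matrix.mul_apply, Matrix.zero_apply]
  refine Eq.trans ?_ h3
  rw [← Finset.sum_add_distrib]
  refine Finset.sum_congr rfl fun k _ => ?_
  have e1 := (hasFDerivAt_entry hR k i).2 d
  have e2 := (hasFDerivAt_entry hR k j).2 d
  refine Eq.trans ?_ (congrArg₂ (· + ·) (congrArg (· * R pt k j) e1)
    (congrArg (R pt k i * ·) e2)).symm
  exact congrArg₂ (· + ·) (mul_comm _ _) rfl

lemma fderiv_rot {R : ℝ × ℝ → Matrix (Fin 3) (Fin 3) ℝ} {pt : ℝ × ℝ}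
    (hR : DifferentiableAt ℝ R pt) (h : ∀ᶠ q in nhds pt, (R q)ᵀ * R q = 1) (d : ℝ × ℝ)
    {w : ℝ × ℝ → Fin 3 → ℝ} (hw : DifferentiableAt ℝ w pt) :
    fderiv ℝ (fun q => R q *ᵥ w q) pt d
      = R pt *ᵥ (cross (vecOf ((R pt)ᵀ * fderiv ℝ R pt d)) (w pt) + fderiv ℝ w pt d) := by
  have h3 : R pt * (R pt)ᵀ = 1 := mul_eq_one_comm.1 h.self_of_nhds
  rw [fderiv_mulVec hR hw, ← skew_mulVec _ (skew_deriv hR h d), Matrix.mulVec_add,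
    Matrix.mulVec_mulVec, ← Matrix.mul_assoc, h3, Matrix.one_mul]

lemma cross_add_left (a b c : Fin 3 → ℝ) : cross (a + b) c = cross a c + cross b c := by
  ext i; fin_cases i <;> simp [cross] <;> ring

lemma cross_anti (a b : Fin 3 → ℝ) : cross a b = - cross b a := by
  ext i; fin_cases i <;> simp [cross] <;> ring

lemma diff_vecOf {A : ℝ × ℝ → Matrix (Fin 3) (Fin 3) ℝ} {pt : ℝ × ℝ}
    (h : ∀ i j, DifferentiableAt ℝ (fun q => A q i j) pt) :
    DifferentiableAt ℝ (fun q => vecOf (A q)) pt := by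
  refine differentiableAt_pi.2 fun i => ?_
  fin_cases i
  · exact h 2 1
  · exact h 0 2
  · exact h 1 0

lemma diff_elim {a b : ℝ × ℝ → Fin 3 → ℝ} {pt : ℝ × ℝ}
    (ha : DifferentiableAt ℝ a pt) (hb : DifferentiableAt ℝ b pt) :
    DifferentiableAt ℝ (fun q => (Sum.elim (a q) (b q) : I6 → ℝ)) pt := by
  refine differentiableAt_pi.2 fun i => ?_
  rcases i with i | i
  · exact (hasFDerivAt_coord ha i).1
  · exact (hasFDerivAt_coord hb i).1

/-- Equivalence, under the transformation to intrinsic variables, between the first six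
governing equations of the IGEB model and the governing system of the GEB model. -/
theorem stmt_16 (ℓ T : ℝ) (hℓ : 0 < ℓ) (hT : 0 < T)
    (M C : ℝ → Matrix I6 I6 ℝ)
    (hM : ContDiffOn ℝ 1 M (Set.Icc 0 ℓ)) (hC : ContDiffOn ℝ 1 C (Set.Icc 0 ℓ))
    (hMpos : ∀ x ∈ Set.Icc (0 : ℝ) ℓ, (M x).PosDef)
    (hCpos : ∀ x ∈ Set.Icc (0 : ℝ) ℓ, (C x).PosDef)
    (Υc : ℝ → (Fin 3 → ℝ)) (hΥc : ContDiffOn ℝ 1 Υc (Set.Icc 0 ℓ))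
    (Φ Ψ : ℝ × ℝ → (Fin 3 → ℝ))
    (hΦ : ContinuousOn Φ (Set.Icc 0 ℓ ×ˢ Set.Icc 0 T))
    (hΨ : ContinuousOn Ψ (Set.Icc 0 ℓ ×ˢ Set.Icc 0 T))
    (p : ℝ × ℝ → (Fin 3 → ℝ)) (R : ℝ × ℝ → Matrix (Fin 3) (Fin 3) ℝ)
    (hp : ContDiffOn ℝ 2 p (Set.Icc 0 ℓ ×ˢ Set.Icc 0 T))
    (hR : ContDiffOn ℝ 2 R (Set.Icc 0 ℓ ×ˢ Set.Icc 0 T))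
    (hSO : ∀ pt ∈ Set.Icc (0 : ℝ) ℓ ×ˢ Set.Icc (0 : ℝ) T,
      (R pt)ᵀ * R pt = 1 ∧ (R pt).det = 1) :
    (∀ pt ∈ Set.Ioo (0 : ℝ) ℓ ×ˢ Set.Ioo (0 : ℝ) T,
        ((fun i => Mdtv M p R pt (Sum.inl i))
            - fderiv ℝ (z1f C Υc p R) pt ((1 : ℝ), (0 : ℝ))
            - cross (Υc pt.1) (z1f C Υc p R pt)
            + cross (v2f R pt) (h1f M p R pt)
            + cross (z1f C Υc p R pt) (s2f R Υc pt) = Φ pt) ∧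
        ((fun i => Mdtv M p R pt (Sum.inr i))
            - fderiv ℝ (z2f C Υc p R) pt ((1 : ℝ), (0 : ℝ))
            - cross e1v (z1f C Υc p R pt)
            - cross (Υc pt.1) (z2f C Υc p R pt)
            + cross (v1f p R pt) (h1f M p R pt)
            + cross (v2f R pt) (h2f M p R pt)
            + cross (z1f C Υc p R pt) (s1f p R pt)
            + cross (z2f C Υc p R pt) (s2f R Υc pt) = Ψ pt))
    ↔
    (∀ pt ∈ Set.Ioo (0 : ℝ) ℓ ×ˢ Set.Ioo (0 : ℝ) T,
        (fderiv ℝ (fun q => R q *ᵥ h1f M p R q) pt ((0 : ℝ), (1 : ℝ))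
            = fderiv ℝ (fun q => R q *ᵥ z1f C Υc p R q) pt ((1 : ℝ), (0 : ℝ))
              + R pt *ᵥ Φ pt) ∧
        (cross (fderiv ℝ p pt ((0 : ℝ), (1 : ℝ))) (R pt *ᵥ h1f M p R pt)
            + fderiv ℝ (fun q => R q *ᵥ h2f M p R q) pt ((0 : ℝ), (1 : ℝ))
          = cross (fderiv ℝ p pt ((1 : ℝ), (0 : ℝ))) (R pt *ᵥ z1f C Υc p R pt)
              + fderiv ℝ (fun q => R q *ᵥ z2f C Υc p R q) pt ((1 : ℝ), (0 : ℝ))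
              + R pt *ᵥ Ψ pt)) := by
  refine forall₂_congr fun pt hpt => ?_
  have hnx : Set.Icc (0 : ℝ) ℓ ∈ nhds pt.1 := Icc_mem_nhds hpt.1.1 hpt.1.2
  have hnt : Set.Icc (0 : ℝ) T ∈ nhds pt.2 := Icc_mem_nhds hpt.2.1 hpt.2.2
  have hn : Set.Icc (0 : ℝ) ℓ ×ˢ Set.Icc (0 : ℝ) T ∈ nhds pt := prod_mem_nhds hnx hnt
  have hpt' := mem_of_mem_nhds hn
  have hMd : DifferentiableAt ℝ M pt.1 := (hM.contDiffAt hnx).differentiableAt (by norm_num)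
  have hCd : DifferentiableAt ℝ C pt.1 := (hC.contDiffAt hnx).differentiableAt (by norm_num)
  have hYd : DifferentiableAt ℝ Υc pt.1 := (hΥc.contDiffAt hnx).differentiableAt (by norm_num)
  have hM2 : DifferentiableAt ℝ (fun q : ℝ × ℝ => M q.1) pt :=
    DifferentiableAt.comp pt hMd differentiableAt_fst
  have hC2 : DifferentiableAt ℝ (fun q : ℝ × ℝ => C q.1) pt :=
    DifferentiableAt.comp pt hCd differentiableAt_fst
  have hY2 : DifferentiableAt ℝ (fun q : ℝ × ℝ => Υc q.1) pt :=
    DifferentiableAt.comp pt hYd differentiableAt_fst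
  have hM0 : fderiv ℝ (fun q : ℝ × ℝ => M q.1) pt ((0 : ℝ), (1 : ℝ)) = 0 := by
    have := (hMd.hasFDerivAt.comp pt (hasFDerivAt_fst (𝕜 := ℝ) (p := pt))).fderiv
    exact (DFunLike.congr_fun this ((0 : ℝ), (1 : ℝ))).trans (map_zero (fderiv ℝ M pt.1))
  have hRc := hR.contDiffAt hn
  have hpc := hp.contDiffAt hn
  have hRd : DifferentiableAt ℝ R pt := hRc.differentiableAt (by norm_num)
  have hR' : ∀ d : ℝ × ℝ, DifferentiableAt ℝ (fun q => fderiv ℝ R q d) pt := fun d =>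
    ((hRc.fderiv_right (m := 1) (by norm_num)).differentiableAt (by norm_num)).clm_apply
      (differentiableAt_const d)
  have hp' : ∀ d : ℝ × ℝ, DifferentiableAt ℝ (fun q => fderiv ℝ p q d) pt := fun d =>
    ((hpc.fderiv_right (m := 1) (by norm_num)).differentiableAt (by norm_num)).clm_apply
      (differentiableAt_const d)
  have hRT : DifferentiableAt ℝ (fun q => (R q)ᵀ) pt :=
    diff_of_entry fun i j => (hasFDerivAt_entry hRd j i).1
  have hvec : ∀ d : ℝ × ℝ, DifferentiableAt ℝ (fun q => vecOf ((R q)ᵀ * fderiv ℝ R q d)) pt := by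
    intro d
    refine diff_vecOf fun i j => ?_
    simp only [Matrix.mul_apply]
    exact DifferentiableAt.fun_sum fun k _ =>
      (hasFDerivAt_entry hRT i k).1.mul (hasFDerivAt_entry (hR' d) k j).1
  have hv : DifferentiableAt ℝ (vf p R) pt :=
    diff_elim (diff_mulVec hRT (hp' _)) (hvec _)
  have hs : DifferentiableAt ℝ
      (fun q => (Sum.elim (s1f p R q) (s2f R Υc q) : I6 → ℝ)) pt :=
    diff_elim ((diff_mulVec hRT (hp' _)).sub (differentiableAt_const _)) ((hvec _).sub hY2)
  have hz : DifferentiableAt ℝ (zf C Υc p R) pt :=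
    diff_mulVec (diff_inv hC2 (hCpos _ hpt'.1).det_pos.ne') hs
  have hh : DifferentiableAt ℝ (hf M p R) pt := diff_mulVec hM2 hv
  have hz1 : DifferentiableAt ℝ (z1f C Υc p R) pt :=
    differentiableAt_pi.2 fun i => (hasFDerivAt_coord hz (Sum.inl i)).1
  have hz2 : DifferentiableAt ℝ (z2f C Υc p R) pt :=
    differentiableAt_pi.2 fun i => (hasFDerivAt_coord hz (Sum.inr i)).1
  have hh1 : DifferentiableAt ℝ (h1f M p R) pt :=
    differentiableAt_pi.2 fun i => (hasFDerivAt_coord hh (Sum.inl i)).1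
  have hh2 : DifferentiableAt ℝ (h2f M p R) pt :=
    differentiableAt_pi.2 fun i => (hasFDerivAt_coord hh (Sum.inr i)).1
  have hdh : fderiv ℝ (hf M p R) pt ((0 : ℝ), (1 : ℝ)) = Mdtv M p R pt := by
    have := fderiv_mulVec hM2 hv ((0 : ℝ), (1 : ℝ))
    rw [hM0, Matrix.zero_mulVec, zero_add] at this
    exact this
  have hdh1 : fderiv ℝ (h1f M p R) pt ((0 : ℝ), (1 : ℝ))
      = fun i => Mdtv M p R pt (Sum.inl i) := by
    ext i
    rw [← (hasFDerivAt_coord hh1 i).2, ← hdh]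
    exact (hasFDerivAt_coord hh (Sum.inl i)).2 _
  have hdh2 : fderiv ℝ (h2f M p R) pt ((0 : ℝ), (1 : ℝ))
      = fun i => Mdtv M p R pt (Sum.inr i) := by
    ext i
    rw [← (hasFDerivAt_coord hh2 i).2, ← hdh]
    exact (hasFDerivAt_coord hh (Sum.inr i)).2 _
  obtain ⟨hO, hdet⟩ := hSO pt hpt'
  have hO' : R pt * (R pt)ᵀ = 1 := mul_eq_one_comm.1 hO
  have hev : ∀ᶠ q in nhds pt, (R q)ᵀ * R q = 1 := by
    filter_upwards [hn] with q hq using (hSO q hq).1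
  have hpt1 : fderiv ℝ p pt ((0 : ℝ), (1 : ℝ)) = R pt *ᵥ v1f p R pt := by
    simp only [v1f]
    rw [Matrix.mulVec_mulVec, hO', Matrix.one_mulVec]
  have hpx1 : fderiv ℝ p pt ((1 : ℝ), (0 : ℝ)) = R pt *ᵥ (s1f p R pt + e1v) := by
    simp only [s1f]
    rw [sub_add_cancel, Matrix.mulVec_mulVec, hO', Matrix.one_mulVec]
  have hv2 : vecOf ((R pt)ᵀ * fderiv ℝ R pt ((0 : ℝ), (1 : ℝ))) = v2f R pt := rfl
  have hs2 : vecOf ((R pt)ᵀ * fderiv ℝ R pt ((1 : ℝ), (0 : ℝ))) = s2f R Υc pt + Υc pt.1 := by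
    simp only [s2f, sub_add_cancel]
  have hinj : ∀ a b : Fin 3 → ℝ, R pt *ᵥ a = R pt *ᵥ b ↔ a = b := fun a b =>
    ⟨fun h => by
      have := congrArg (fun y => (R pt)ᵀ *ᵥ y) h
      simpa [Matrix.mulVec_mulVec, hO] using this, fun h => by rw [h]⟩
  rw [fderiv_rot hRd hev _ hh1, fderiv_rot hRd hev _ hh2, fderiv_rot hRd hev _ hz1,
    fderiv_rot hRd hev _ hz2, hpt1, hpx1, cross_rot _ hO hdet, cross_rot _ hO hdet,
    hv2, hs2, hdh1, hdh2]
  simp only [← Matrix.mulVec_add, hinj, cross_add_left]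
  rw [cross_anti (z1f C Υc p R pt) (s2f R Υc pt), cross_anti (z1f C Υc p R pt) (s1f p R pt),
    cross_anti (z2f C Υc p R pt) (s2f R Υc pt)]
  refine and_congr ?_ ?_
  · rw [← sub_eq_zero, ← sub_eq_zero (b := _ + Φ pt)]
    refine Eq.congr ?_ rfl
    abel
  · rw [← sub_eq_zero, ← sub_eq_zero (b := _ + Ψ pt)]
    refine Eq.congr ?_ rfl
    abel
end
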